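/- For every nondegenerate triangle K in the plane with longest edge length h, and every function u in V_FM(K), one has ‖∇u‖_K ≤ 0.18868·h·‖D²u‖_K. In other words, the optimal constant C₁(K) in the Fujino–Morley interpolation error estimate ‖∇u‖_K ≤ C₁(K)‖D²u‖_K over V_FM(K) satisfies C₁(K) ≤ 0.18868·h for triangles of arbitrary shape. -/

import Mathlib

open MeasureTheory Real

noncomputable section

/-- Points of the plane. -/
abbrev Pt : Type := ℝ × ℝ

/-- The closed triangle with vertices `O`, `A`, `B`. -/
def Tri (O A B : Pt) : Set Pt := convexHull ℝ {O, A, B}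

/-- The triangle with vertices `O`, `A`, `B` is nondegenerate. -/
def Nondeg (O A B : Pt) : Prop := ¬ Collinear ℝ ({O, A, B} : Set Pt)

/-- Euclidean length of a vector of the plane. -/
def elen (v : Pt) : ℝ := Real.sqrt (v.1 ^ 2 + v.2 ^ 2)

/-- Partial derivative in the `x` direction. -/
def pdx (u : Pt → ℝ) (p : Pt) : ℝ := fderiv ℝ u p (1, 0)

/-- Partial derivative in the `y` direction. -/
def pdy (u : Pt → ℝ) (p : Pt) : ℝ := fderiv ℝ u p (0, 1)

/-- `‖u‖_K²  = ∫_K u² dxdy`. -/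
def l2sq (u : Pt → ℝ) (K : Set Pt) : ℝ := ∫ p in K, (u p) ^ 2

/-- `‖∇u‖_K² = ∫_K (u_x² + u_y²) dxdy`. -/
def h1sq (u : Pt → ℝ) (K : Set Pt) : ℝ := ∫ p in K, ((pdx u p) ^ 2 + (pdy u p) ^ 2)

/-- `‖D²u‖_K² = ∫_K (u_xx² + u_xy² + u_yx² + u_yy²) dxdy`. -/
def h2sq (u : Pt → ℝ) (K : Set Pt) : ℝ :=
  ∫ p in K, ((pdx (pdx u) p) ^ 2 + (pdy (pdx u) p) ^ 2
    + (pdx (pdy u) p) ^ 2 + (pdy (pdy u) p) ^ 2)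

/-- `‖u‖_K`. -/
def l2norm (u : Pt → ℝ) (K : Set Pt) : ℝ := Real.sqrt (l2sq u K)

/-- `‖∇u‖_K`. -/
def h1norm (u : Pt → ℝ) (K : Set Pt) : ℝ := Real.sqrt (h1sq u K)

/-- `‖D²u‖_K`. -/
def h2norm (u : Pt → ℝ) (K : Set Pt) : ℝ := Real.sqrt (h2sq u K)

/-- `u` is twice continuously differentiable on an open neighborhood of `K`. -/
def Smooth2 (u : Pt → ℝ) (K : Set Pt) : Prop :=
  ∃ U : Set Pt, IsOpen U ∧ K ⊆ U ∧ ContDiffOn ℝ 2 u U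

/-- `w` is continuously differentiable on an open neighborhood of `K`. -/
def Smooth1 (w : Pt → ℝ) (K : Set Pt) : Prop :=
  ∃ U : Set Pt, IsOpen U ∧ K ⊆ U ∧ ContDiffOn ℝ 1 w U

/-- Line integral of `g` along the edge from `P` to `Q`:
`∫_e g ds = |Q − P| ∫₀¹ g(P + t(Q−P)) dt`. -/
def edgeInt (g : Pt → ℝ) (P Q : Pt) : ℝ :=
  elen (Q - P) * ∫ t in (0:ℝ)..1, g (P + t • (Q - P))

/-- Outward unit normal of the edge from `P` to `Q` of the triangle whose third vertex is `R`
(the unit vector perpendicular to `Q − P` pointing away from `R`). -/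
def outNormal (P Q R : Pt) : Pt :=
  (if (Q - P).2 * (R - P).1 - (Q - P).1 * (R - P).2 ≤ 0 then (elen (Q - P))⁻¹
    else -(elen (Q - P))⁻¹) • ((Q - P).2, -((Q - P).1))

/-- The normal derivative `∂u/∂n = ∇u ⋅ n` along the edge from `P` to `Q`,
with `n` the outward normal (w.r.t. third vertex `R`). -/
def normalDeriv (u : Pt → ℝ) (P Q R : Pt) (p : Pt) : ℝ := fderiv ℝ u p (outNormal P Q R)

/-- `u ∈ V_FM(K)` for the triangle `K` with vertices `O`, `A`, `B`: `u` is C² near `K`,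
vanishes at the three vertices, and has vanishing mean normal derivative on each edge. -/
def MemVFM (u : Pt → ℝ) (O A B : Pt) : Prop :=
  Smooth2 u (Tri O A B) ∧ u O = 0 ∧ u A = 0 ∧ u B = 0 ∧
  edgeInt (normalDeriv u O A B) O A = 0 ∧
  edgeInt (normalDeriv u A B O) A B = 0 ∧
  edgeInt (normalDeriv u B O A) B O = 0

/-- `w ∈ V_CR(K)` for the triangle `K` with vertices `O`, `A`, `B`: `w` is C¹ near `K`
and has vanishing mean value on each edge. -/
def MemVCR (w : Pt → ℝ) (O A B : Pt) : Prop :=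
  Smooth1 w (Tri O A B) ∧
  edgeInt w O A = 0 ∧ edgeInt w A B = 0 ∧ edgeInt w B O = 0

/-- The longest edge length of the triangle with vertices `O`, `A`, `B`. -/
def longestEdge (O A B : Pt) : ℝ := max (elen (A - O)) (max (elen (B - A)) (elen (O - B)))

/-- The linear map with matrix `[[1, α], [0, β]]`. -/
def Qmap (α β : ℝ) (p : Pt) : Pt := (p.1 + α * p.2, β * p.2)

/-- The inverse of `Qmap α β` (for `β ≠ 0`). -/
def Qinv (α β : ℝ) (p : Pt) : Pt := (p.1 - (α / β) * p.2, p.2 / β)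

/-! The proof bounds `h1sq` by `89/2500 * h² * h2sq`, and `89/2500 ≤ 0.18868²`.

The edge conditions of a Fujino–Morley function say that the whole gradient has vanishing mean on
each edge (`meanGradZero`), so every directional derivative of `u` is a Crouzeix–Raviart function.
Let `V` be the vertex opposite to the shortest edge, and `m - d` (the longest edge) and `m + d` the
edges issuing from it. In the coordinates `(s,t) ↦ V + s (m + t d)` on `[0,1] × [-1,1]`, with area
element proportional to `s`, a Crouzeix–Raviart function `w` satisfies `∂_s w = p + t q` and
`∂_t w = s q`, where `p = ∂_m w` and `q = ∂_d w`. The shape of the triangle enters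
only through the Euclidean metric expressed in terms of `∂_m` and `∂_d`.

If the two edges at `V` are equally long, that metric is diagonal: with `c` the cosine of the angle
at `V`, `h² |∇u|² = a (∂_m u)² + b (∂_d u)²` where `a = 2/(1+c)` and `b = 2/(1-c)`, and `b ≥ 4`
because `c ≥ 1/2`. In general there is an additional rank-one term `σ (∂_w u)²`, and the Hessian
picks up at least the corresponding two mixed terms (`grad_alg`, `hess_alg`). The theorem follows
from an estimate for the diagonal part (`strip_fm`) and one for a single Crouzeix–Raviart function
with twice the constant (`strip_cr`).

Both come from inequalities `‖w‖² ≤ 89/2500 (ka ‖p‖² + kb ‖q‖²)` for the parts of `w` that are even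
and odd in `t`, with various weights `ka`, `kb`. On each slice `s = const` only a few Legendre
moments in `t` are retained, the remainder being controlled by a Hilbert–Schmidt bound (`even_slice`,
`odd_slice`). This leaves one-dimensional problems in `s`. For the even part (`even2D`) the vanishing
means turn into orthogonality to the constants in `L²(s ds)`, and the problem is solved by a Jacobi
expansion (`prim_norm_le`) and a Riccati argument (`jacobi`). For the odd part (`odd2D`) the moments
satisfy a linear system with a quadratic storage function `V` whose derivative makes the integrand
pointwise nonnegative (`odd_diss`); nonnegativity is certified by sums of squares in the Bernstein
form (`odd_psd_a`, `odd_psd_b`). -/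

namespace FM

/-! ### Weighted inner products, primitives, and polynomials as coefficient lists -/

/-- The weighted inner product `∫₀¹ ω f g` on continuous functions. -/
def ip (ω : C(ℝ, ℝ)) : C(ℝ, ℝ) →ₗ[ℝ] C(ℝ, ℝ) →ₗ[ℝ] ℝ :=
  LinearMap.mk₂ ℝ (fun f g => ∫ x in (0:ℝ)..1, ω x * f x * g x)
    (fun f f' g => by
      rw [← intervalIntegral.integral_add
        (Continuous.intervalIntegrable (by fun_prop) _ _)
        (Continuous.intervalIntegrable (by fun_prop) _ _)]
      congr 1; ext x; simp; ring)
    (fun c f g => by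
      rw [smul_eq_mul, ← intervalIntegral.integral_const_mul]
      congr 1; ext x; simp; ring)
    (fun f g g' => by
      rw [← intervalIntegral.integral_add
        (Continuous.intervalIntegrable (by fun_prop) _ _)
        (Continuous.intervalIntegrable (by fun_prop) _ _)]
      congr 1; ext x; simp; ring)
    (fun c f g => by
      rw [smul_eq_mul, ← intervalIntegral.integral_const_mul]
      congr 1; ext x; simp; ring)

theorem ip_apply (ω f g : C(ℝ, ℝ)) : ip ω f g = ∫ x in (0:ℝ)..1, ω x * f x * g x := rfl

theorem ip_symm (ω f g : C(ℝ, ℝ)) : ip ω f g = ip ω g f := by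
  rw [ip_apply, ip_apply]; congr 1; ext x; ring

theorem ip_nonneg {ω : C(ℝ, ℝ)} (hω : ∀ x ∈ Set.Icc (0:ℝ) 1, 0 ≤ ω x) (f : C(ℝ, ℝ)) :
    0 ≤ ip ω f f := by
  rw [ip_apply]
  apply intervalIntegral.integral_nonneg zero_le_one
  intro x hx
  rw [mul_assoc]
  exact mul_nonneg (hω x hx) (mul_self_nonneg _)

theorem ip_cs {ω : C(ℝ, ℝ)} (hω : ∀ x ∈ Set.Icc (0:ℝ) 1, 0 ≤ ω x) (f g : C(ℝ, ℝ)) :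
    (ip ω f g) ^ 2 ≤ ip ω f f * ip ω g g := by
  have h : ∀ t : ℝ, 0 ≤ ip ω g g * (t * t) + (2 * ip ω f g) * t + ip ω f f := by
    intro t
    have := ip_nonneg hω (f + t • g)
    simp only [map_add, map_smul, LinearMap.add_apply, LinearMap.smul_apply, smul_eq_mul] at this
    rw [ip_symm ω g f] at this
    linarith
  have := discrim_le_zero h
  rw [discrim] at this
  nlinarith

/-- The primitive vanishing at `1`: `(prim f)(x) = -∫ₓ¹ f`. -/
def prim : C(ℝ, ℝ) →ₗ[ℝ] C(ℝ, ℝ) where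
  toFun f := ⟨fun x => ∫ t in (1:ℝ)..x, f t,
    intervalIntegral.continuous_primitive (fun a b => f.continuous.intervalIntegrable a b) 1⟩
  map_add' f g := by
    ext x
    simp only [ContinuousMap.coe_mk, ContinuousMap.add_apply]
    exact intervalIntegral.integral_add (f.continuous.intervalIntegrable _ _)
      (g.continuous.intervalIntegrable _ _)
  map_smul' c f := by
    ext x
    simp only [ContinuousMap.coe_mk, ContinuousMap.smul_apply, RingHom.id_apply, smul_eq_mul]
    exact intervalIntegral.integral_const_mul _ _

theorem prim_apply (f : C(ℝ, ℝ)) (x : ℝ) : prim f x = ∫ t in (1:ℝ)..x, f t := rfl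

theorem prim_one (f : C(ℝ, ℝ)) : prim f 1 = 0 := by simp [prim_apply]

theorem prim_hasDerivAt (f : C(ℝ, ℝ)) (x : ℝ) : HasDerivAt (prim f) (f x) x :=
  intervalIntegral.integral_hasDerivAt_right (f.continuous.intervalIntegrable _ _)
    (f.continuous.stronglyMeasurableAtFilter _ _) f.continuous.continuousAt

/-- `prim f` is the only `C¹` primitive of `f` vanishing at `1`. -/
theorem prim_eq_of_hasDerivAt {f F : C(ℝ, ℝ)} (h : ∀ x, HasDerivAt F (f x) x) (h1 : F 1 = 0) :
    prim f = F := by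
  ext x
  rw [prim_apply, intervalIntegral.integral_eq_sub_of_hasDerivAt (fun y _ => h y)
    (f.continuous.intervalIntegrable _ _), h1, sub_zero]


/-- The polynomial function with coefficients `l` (constant term first). -/
def pe : List ℚ → C(ℝ, ℝ)
  | [] => 0
  | c :: l => ContinuousMap.const ℝ (c : ℝ) + ContinuousMap.id ℝ * pe l

theorem pe_nil (x : ℝ) : pe [] x = 0 := rfl
theorem pe_cons (c : ℚ) (l : List ℚ) (x : ℝ) : pe (c :: l) x = c + x * pe l x := by
  simp [pe]

/-- Coefficients of the sum of two polynomials. -/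
def padd : List ℚ → List ℚ → List ℚ
  | [], m => m
  | l, [] => l
  | a :: l, b :: m => (a + b) :: padd l m

theorem pe_padd (l m : List ℚ) (x : ℝ) : pe (padd l m) x = pe l x + pe m x := by
  induction l generalizing m with
  | nil => simp [padd, pe_nil]
  | cons a l ih =>
    cases m with
    | nil => simp [padd, pe_nil]
    | cons b m => simp only [padd, pe_cons, ih]; push_cast; ring

/-- Coefficients of a scalar multiple of a polynomial. -/
def psmul (c : ℚ) : List ℚ → List ℚ
  | [] => []
  | a :: l => (c * a) :: psmul c l

theorem pe_psmul (c : ℚ) (l : List ℚ) (x : ℝ) : pe (psmul c l) x = c * pe l x := by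
  induction l with
  | nil => simp [psmul, pe_nil]
  | cons a l ih => simp only [psmul, pe_cons, ih]; push_cast; ring

/-- Coefficients of the product of two polynomials. -/
def pmul : List ℚ → List ℚ → List ℚ
  | [], _ => []
  | a :: l, m => padd (psmul a m) (0 :: pmul l m)

theorem pe_pmul (l m : List ℚ) (x : ℝ) : pe (pmul l m) x = pe l x * pe m x := by
  induction l with
  | nil => simp [pmul, pe_nil]
  | cons a l ih => simp only [pmul, pe_cons, pe_padd, pe_psmul, ih]; push_cast; ring

/-- `∫₀¹ xᵏ p(x) dx` for the polynomial `p` with coefficients `l`. -/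
def pint : ℕ → List ℚ → ℚ
  | _, [] => 0
  | k, a :: l => a / (k + 1) + pint (k + 1) l

theorem integral_pe (k : ℕ) (l : List ℚ) : ∫ x in (0:ℝ)..1, x ^ k * pe l x = (pint k l : ℝ) := by
  induction l generalizing k with
  | nil => simp [pint, pe_nil]
  | cons a l ih =>
    have : ∀ x : ℝ, x ^ k * pe (a :: l) x = a * x ^ k + x ^ (k + 1) * pe l x := by
      intro x; rw [pe_cons]; ring
    simp only [this]
    rw [intervalIntegral.integral_add (Continuous.intervalIntegrable (by fun_prop) _ _)
      (Continuous.intervalIntegrable (by fun_prop) _ _), ih, pint,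
      intervalIntegral.integral_const_mul, integral_pow]
    push_cast
    simp; ring

/-- Weighted inner products of polynomials are rational numbers computed from coefficients, so they can
be evaluated by `decide`. -/
theorem ip_pe (w l m : List ℚ) : ip (pe w) (pe l) (pe m) = (pint 0 (pmul w (pmul l m)) : ℝ) := by
  rw [← integral_pe, ip_apply]
  congr 1; ext x
  rw [pe_pmul, pe_pmul]; ring

/-- Coefficients of `∫₀ˣ tᵏ p(t) dt / xᵏ⁺¹`, for use by `pprim`. -/
def pprimAux : ℕ → List ℚ → List ℚ
  | _, [] => []
  | k, a :: l => a / (k + 1) :: pprimAux (k + 1) l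

theorem pe_pprimAux (k : ℕ) (l : List ℚ) (x : ℝ) :
    ∫ t in (0:ℝ)..x, t ^ k * pe l t = x ^ (k + 1) * pe (pprimAux k l) x := by
  induction l generalizing k with
  | nil => simp [pprimAux, pe_nil]
  | cons a l ih =>
    have : ∀ x : ℝ, x ^ k * pe (a :: l) x = a * x ^ k + x ^ (k + 1) * pe l x := by
      intro x; rw [pe_cons]; ring
    simp only [this]
    rw [intervalIntegral.integral_add (Continuous.intervalIntegrable (by fun_prop) _ _)
      (Continuous.intervalIntegrable (by fun_prop) _ _), ih, pprimAux, pe_cons,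
      intervalIntegral.integral_const_mul, integral_pow]
    push_cast
    simp; ring

/-- Coefficients of the primitive vanishing at `1`. -/
def pL (l : List ℚ) : List ℚ := (-pint 0 l) :: pprimAux 0 l

theorem prim_pe (l : List ℚ) : prim (pe l) = pe (pL l) := by
  ext x
  have h0 := integral_pe 0 l
  have h1 := pe_pprimAux 0 l x
  simp only [pow_zero, one_mul, zero_add, pow_one] at h0 h1
  rw [prim_apply, ← intervalIntegral.integral_interval_sub_left (a := 0)
    ((pe l).continuous.intervalIntegrable _ _) ((pe l).continuous.intervalIntegrable _ _),
    h0, h1, pL, pe_cons]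
  push_cast; ring

/-! ### Hilbert–Schmidt bounds for the primitive operator -/

/-- The right-hand side is `∫₀¹ (g - χ)²` with `χ` the indicator function of `[x, 1]`, because
`prim g x = -⟨χ, g⟩` and `‖χ‖² = 1 - x`. -/
theorem kernel_one (x : ℝ) (hx : x ∈ Set.Ioc (0:ℝ) 1) (g : C(ℝ, ℝ)) :
    0 ≤ ip (pe [1]) g g + 2 * prim g x + (1 - x) := by
  have hi : ∀ a b, IntervalIntegrable (fun t => pe [1] t * g t * g t) volume a b := fun a b =>
    Continuous.intervalIntegrable (by fun_prop) _ _
  have h1 : 0 ≤ ∫ t in (0:ℝ)..x, pe [1] t * g t * g t :=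
    intervalIntegral.integral_nonneg hx.1.le (fun t _ => by
      simp [pe_cons, pe_nil]; exact mul_self_nonneg _)
  have h2 : 0 ≤ ∫ t in x..(1:ℝ), (g t - 1) ^ 2 :=
    intervalIntegral.integral_nonneg hx.2 (fun t _ => sq_nonneg _)
  have h3 : ∫ t in x..(1:ℝ), (g t - 1) ^ 2
      = (∫ t in x..(1:ℝ), pe [1] t * g t * g t) + 2 * prim g x + (1 - x) := by
    have : ∀ t, (g t - 1) ^ 2 = pe [1] t * g t * g t - 2 * g t + 1 := by
      intro t; simp [pe_cons, pe_nil]; ring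
    simp only [this]
    rw [intervalIntegral.integral_add (Continuous.intervalIntegrable (by fun_prop) _ _)
      (Continuous.intervalIntegrable (by fun_prop) _ _),
      intervalIntegral.integral_sub (Continuous.intervalIntegrable (by fun_prop) _ _)
      (Continuous.intervalIntegrable (by fun_prop) _ _), intervalIntegral.integral_const_mul,
      prim_apply, intervalIntegral.integral_symm x 1]
    simp; ring
  rw [ip_apply, ← intervalIntegral.integral_add_adjacent_intervals (hi 0 x) (hi x 1)]
  linarith

/-- The right-hand side is `∫₀¹ t (g - χ/t)² dt` with `χ` the indicator function of `[x, 1]`, because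
`prim g x = -⟨χ/t, g⟩` and `‖χ/t‖² = -log x` in the weighted space `L²(t dt)`. -/
theorem kernel_id (x : ℝ) (hx : x ∈ Set.Ioc (0:ℝ) 1) (g : C(ℝ, ℝ)) :
    0 ≤ ip (pe [0, 1]) g g + 2 * prim g x + (-log x) := by
  have hi : ∀ a b, IntervalIntegrable (fun t => pe [0, 1] t * g t * g t) volume a b := fun a b =>
    Continuous.intervalIntegrable (by fun_prop) _ _
  have h1 : 0 ≤ ∫ t in (0:ℝ)..x, pe [0, 1] t * g t * g t :=
    intervalIntegral.integral_nonneg hx.1.le (fun t ht => by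
      simp only [pe_cons, pe_nil]
      have := mul_nonneg ht.1 (mul_self_nonneg (g t))
      push_cast; linarith)
  have hinv : IntervalIntegrable (fun t : ℝ => 1 / t) volume x 1 := by
    apply intervalIntegral.intervalIntegrable_one_div
    · intro t ht
      rw [Set.uIcc_of_le hx.2] at ht
      exact (hx.1.trans_le ht.1).ne'
    · fun_prop
  have h2 : 0 ≤ ∫ t in x..(1:ℝ), (pe [0, 1] t * g t * g t - 2 * g t + 1 / t) :=
    intervalIntegral.integral_nonneg hx.2 (fun t ht => by
      have h0 : 0 < t := hx.1.trans_le ht.1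
      have : pe [0, 1] t * g t * g t - 2 * g t + 1 / t = (t * g t - 1) ^ 2 / t := by
        simp only [pe_cons, pe_nil]; push_cast; field_simp; ring
      rw [this]; positivity)
  have h3 : ∫ t in x..(1:ℝ), (pe [0, 1] t * g t * g t - 2 * g t + 1 / t)
      = (∫ t in x..(1:ℝ), pe [0, 1] t * g t * g t) + 2 * prim g x + (-log x) := by
    rw [intervalIntegral.integral_add (Continuous.intervalIntegrable (by fun_prop) _ _) hinv,
      intervalIntegral.integral_sub (Continuous.intervalIntegrable (by fun_prop) _ _)
      (Continuous.intervalIntegrable (by fun_prop) _ _), intervalIntegral.integral_const_mul,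
      prim_apply, intervalIntegral.integral_symm x 1, integral_one_div_of_pos hx.1 one_pos]
    simp; ring
  rw [ip_apply, ← intervalIntegral.integral_add_adjacent_intervals (hi 0 x) (hi x 1)]
  linarith

/-- Evaluation of `prim` at `x` is a functional of squared norm at most `k`. On the orthogonal
complement of the orthogonal family `Q i` its squared norm drops by the squares of its values on the
normalised `Q i`. -/
theorem hs_pointwise {N : ℕ} (ω : C(ℝ, ℝ))
    (Q : Fin N → C(ℝ, ℝ)) (n : Fin N → ℝ) (hn : ∀ i, 0 < n i)
    (hQ : ∀ i j, ip ω (Q i) (Q j) = if i = j then n i else 0) (k x : ℝ)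
    (hk : ∀ g : C(ℝ, ℝ), 0 ≤ ip ω g g + 2 * prim g x + k)
    (R : C(ℝ, ℝ)) (hR : ∀ i, ip ω (Q i) R = 0) :
    (prim R x) ^ 2 ≤ (k - ∑ i, (prim (Q i) x) ^ 2 / n i) * ip ω R R := by
  have hev : ∀ f : Fin N → C(ℝ, ℝ), (∑ i, f i) x = ∑ i, f i x := fun f =>
    ContinuousMap.sum_apply _ f x
  have h : ∀ t : ℝ, 0 ≤ ip ω R R * (t * t) + (2 * prim R x) * t
      + (k - ∑ i, (prim (Q i) x) ^ 2 / n i) := by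
    intro t
    have := hk (t • R + ∑ i, (-(prim (Q i) x / n i)) • Q i)
    have hR' : ∀ i, ip ω R (Q i) = 0 := fun i => by rw [ip_symm, hR]
    simp only [map_add, map_smul, map_sum, LinearMap.add_apply, LinearMap.smul_apply,
      LinearMap.sum_apply, smul_eq_mul, hR, hR', hQ, ContinuousMap.add_apply,
      ContinuousMap.smul_apply, hev, mul_zero, Finset.sum_const_zero, add_zero, zero_add,
      mul_ite, Finset.sum_ite_eq', Finset.mem_univ, if_true] at this
    have e1 : ∑ i, -(prim (Q i) x / n i) * (-(prim (Q i) x / n i) * n i)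
        = ∑ i, (prim (Q i) x) ^ 2 / n i := Finset.sum_congr rfl (fun i _ => by
          have := (hn i).ne'; field_simp)
    have e2 : ∑ i, -(prim (Q i) x / n i) * prim (Q i) x
        = -∑ i, (prim (Q i) x) ^ 2 / n i := by
          rw [← Finset.sum_neg_distrib]
          exact Finset.sum_congr rfl (fun i _ => by ring)
    rw [e1, e2] at this
    linarith
  have := discrim_le_zero h
  rw [discrim] at this
  nlinarith

/-- Hilbert–Schmidt bound for `prim` on the orthogonal complement of the `Q i`. -/
theorem hs {N : ℕ} (ω : C(ℝ, ℝ)) (hω : ∀ x ∈ Set.Icc (0:ℝ) 1, 0 ≤ ω x)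
    (Q : Fin N → C(ℝ, ℝ)) (n : Fin N → ℝ) (hn : ∀ i, 0 < n i)
    (hQ : ∀ i j, ip ω (Q i) (Q j) = if i = j then n i else 0) (k : ℝ → ℝ)
    (hk : ∀ x ∈ Set.Ioc (0:ℝ) 1, ∀ g : C(ℝ, ℝ), 0 ≤ ip ω g g + 2 * prim g x + k x)
    (hki : IntervalIntegrable (fun x => ω x * k x) volume 0 1)
    (R : C(ℝ, ℝ)) (hR : ∀ i, ip ω (Q i) R = 0) :
    ip ω (prim R) (prim R) ≤ ((∫ x in (0:ℝ)..1, ω x * k x)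
      - ∑ i, ip ω (prim (Q i)) (prim (Q i)) / n i) * ip ω R R := by
  have hii : ∀ i, IntervalIntegrable
      (fun x => ω x * prim (Q i) x * prim (Q i) x / n i) volume 0 1 := fun i =>
    Continuous.intervalIntegrable (by fun_prop) _ _
  have hsum : IntervalIntegrable
      (fun x => ∑ i, ω x * prim (Q i) x * prim (Q i) x / n i) volume 0 1 :=
    Continuous.intervalIntegrable (by fun_prop) _ _
  have e : ((∫ x in (0:ℝ)..1, ω x * k x)
      - ∑ i, ip ω (prim (Q i)) (prim (Q i)) / n i) * ip ω R R
      = ∫ x in (0:ℝ)..1, (ω x * k x - ∑ i, ω x * prim (Q i) x * prim (Q i) x / n i)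
        * ip ω R R := by
    rw [intervalIntegral.integral_mul_const, intervalIntegral.integral_sub hki hsum,
      intervalIntegral.integral_finsetSum (fun i _ => hii i)]
    congr 3
    ext i
    rw [intervalIntegral.integral_div, ip_apply]
  rw [e, ip_apply]
  apply intervalIntegral.integral_mono_on_of_le_Ioo zero_le_one
    (Continuous.intervalIntegrable (by fun_prop) _ _) ((hki.sub hsum).mul_const _)
  intro x hx
  have h1 := hs_pointwise ω Q n hn hQ (k x) x (hk x ⟨hx.1, hx.2.le⟩) R hR
  have h2 := mul_le_mul_of_nonneg_left h1 (hω x ⟨hx.1.le, hx.2.le⟩)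
  calc ω x * prim R x * prim R x = ω x * prim R x ^ 2 := by ring
    _ ≤ _ := h2
    _ = _ := by
      rw [← mul_assoc, mul_sub, Finset.mul_sum]
      congr 2
      exact Finset.sum_congr rfl (fun i _ => by ring)

/-- Integration by parts, with `K` the primitive of `ω f` vanishing at `0`. -/
theorem parts {ω f K : C(ℝ, ℝ)} (hK : ∀ x, HasDerivAt K (ω x * f x) x) (h0 : K 0 = 0)
    (g : C(ℝ, ℝ)) : ip ω f (prim g) = - ∫ x in (0:ℝ)..1, K x * g x := by
  rw [ip_apply, intervalIntegral.integral_mul_deriv_eq_deriv_mul (u := K) (u' := fun x => ω x * f x)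
    (v := prim g) (fun x _ => hK x) (fun x _ => prim_hasDerivAt g x)
    (Continuous.intervalIntegrable (by fun_prop) _ _)
    (Continuous.intervalIntegrable (by fun_prop) _ _), h0, prim_one]
  ring


theorem pe_hasDerivAt (l : List ℚ) (x : ℝ) : HasDerivAt (pe (0 :: pprimAux 0 l)) (pe l x) x := by
  have h : (pe (0 :: pprimAux 0 l) : ℝ → ℝ) = fun x => ∫ t in (0:ℝ)..x, pe l t := by
    ext x
    have := pe_pprimAux 0 l x
    simp only [pow_zero, one_mul, zero_add, pow_one] at this
    rw [this, pe_cons]; simp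
  rw [h]
  exact intervalIntegral.integral_hasDerivAt_right ((pe l).continuous.intervalIntegrable _ _)
    ((pe l).continuous.stronglyMeasurableAtFilter _ _) (pe l).continuous.continuousAt

/-- Moving `prim` to the other factor: the adjoint applied to a polynomial is again a polynomial. -/
theorem ip_prim_pe (w l : List ℚ) (g : C(ℝ, ℝ)) :
    ip (pe w) (prim (pe l)) (prim g)
      = - ip (pe [1]) (pe (0 :: pprimAux 0 (pmul w (pL l)))) g := by
  rw [parts (K := pe (0 :: pprimAux 0 (pmul w (pL l)))) _ (by simp [pe_cons]), ip_apply]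
  · congr 2; ext x; simp [pe_cons, pe_nil]
  · intro x
    have := pe_hasDerivAt (pmul w (pL l)) x
    rwa [pe_pmul, ← prim_pe] at this

theorem ip_id_eq (l : List ℚ) (g : C(ℝ, ℝ)) :
    ip (pe [1]) (pe (0 :: l)) g = ip (pe [0, 1]) (pe l) g := by
  rw [ip_apply, ip_apply]; congr 1; ext x; simp [pe_cons, pe_nil]

theorem ip_pe_nonneg_one : ∀ x ∈ Set.Icc (0:ℝ) 1, 0 ≤ pe [1] x := by
  intro x _; simp [pe_cons, pe_nil]
theorem ip_pe_nonneg_id : ∀ x ∈ Set.Icc (0:ℝ) 1, 0 ≤ pe [0, 1] x := by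
  intro x hx; simpa [pe_cons, pe_nil] using hx.1

theorem integral_id_mul_neg_log : ∫ x in (0:ℝ)..1, pe [0, 1] x * (-log x) = 1 / 4 := by
  have hc : Continuous fun x : ℝ => x ^ 2 / 4 - x * (x * log x) / 2 := by
    have := Real.continuous_mul_log
    fun_prop
  have hi : Continuous fun x : ℝ => -(x * log x) := Real.continuous_mul_log.neg
  have e : ∀ x : ℝ, pe [0, 1] x * (-log x) = -(x * log x) := by
    intro x; simp [pe_cons, pe_nil]
  simp only [e]
  rw [intervalIntegral.integral_eq_sub_of_hasDerivAt_of_le zero_le_one hc.continuousOn _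
    (hi.intervalIntegrable _ _)]
  · norm_num
  · intro x hx
    have hx0 : x ≠ 0 := hx.1.ne'
    have h := ((hasDerivAt_id x).pow 2).div_const 4 |>.sub
      (((hasDerivAt_id x).mul ((hasDerivAt_id x).mul (Real.hasDerivAt_log hx0))).div_const 2)
    refine h.congr_deriv ?_
    simp only [Pi.mul_apply, id]; field_simp; ring

theorem intervalIntegrable_id_mul_neg_log :
    IntervalIntegrable (fun x => pe [0, 1] x * (-log x)) volume 0 1 := by
  apply Continuous.intervalIntegrable
  have := Real.continuous_mul_log.neg
  refine this.congr (fun x => ?_)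
  simp [pe_cons, pe_nil]

/-! ### The primitive operator on mean-zero functions -/

/-- The Jacobi polynomials orthogonal for the weight `x` on `[0,1]`. -/
def jac : Fin 8 → List ℚ :=
  ![[1], [-2, 3], [3, -12, 10], [-4, 30, -60, 35], [5, -60, 210, -280, 126],
    [-6, 105, -560, 1260, -1260, 462], [7, -168, 1260, -4200, 6930, -5544, 1716],
    [-8, 252, -2520, 11550, -27720, 36036, -24024, 6435]]

theorem jac_gram_rat : ∀ i j : Fin 8, pint 0 (pmul [0, 1] (pmul (jac i) (jac j)))
    = if i = j then 1 / (2 * ((i : ℕ) + 1) : ℚ) else 0 := by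
  decide +kernel

theorem jac_gram (i j : Fin 8) : ip (pe [0, 1]) (pe (jac i)) (pe (jac j))
    = if i = j then 1 / (2 * ((i : ℕ) + 1) : ℝ) else 0 := by
  rw [ip_pe, jac_gram_rat]
  split_ifs <;> push_cast <;> rfl

/-- The Gram matrix of the functions `prim (jac i)`. -/
def jacPrim : Fin 6 → Fin 6 → ℚ :=
  ![![1/12, 1/120, -1/180, 0, 0, 0],
    ![1/120, 1/120, 1/2520, -3/2240, 0, 0],
    ![-1/180, 1/2520, 1/420, 1/15120, -1/1890, 0],
    ![0, -3/2240, 1/15120, 1/1008, 1/55440, -5/19008],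
    ![0, 0, -1/1890, 1/55440, 1/1980, 1/154440],
    ![0, 0, 0, -5/19008, 1/154440, 1/3432]]

theorem jac_prim_rat : ∀ i j : Fin 6, pint 0 (pmul [0, 1] (pmul (pL (jac (i.castLE (by norm_num))))
    (pL (jac (j.castLE (by norm_num)))))) = jacPrim i j := by
  decide +kernel

theorem jac_prim_gram (i j : Fin 6) :
    ip (pe [0, 1]) (prim (pe (jac (i.castLE (by norm_num)))))
      (prim (pe (jac (j.castLE (by norm_num))))) = jacPrim i j := by
  rw [prim_pe, prim_pe, ip_pe, jac_prim_rat]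

/-- `jac_prim_gram` with the indices in `Fin 8`. -/
theorem jac_prim_val (i j : Fin 6) (k l : Fin 8) (hk : i.castLE (by norm_num) = k := by rfl)
    (hl : j.castLE (by norm_num) = l := by rfl) :
    ip (pe [0, 1]) (prim (pe (jac k))) (prim (pe (jac l))) = jacPrim i j := by
  subst hk hl
  exact jac_prim_gram i j

/-- The Jacobi expansion of `prim* prim (jac i)`, tested against `R`; the adjoint is the one of the
space `L²(x dx)`. The hypothesis compares lists of coefficients, and its summand `psmul 0 (jac 7)`
pads the left-hand side with zeros to length eight. -/
theorem ip_prim_jac (i : Fin 8) (c : Fin 8 → ℚ)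
    (h : padd (psmul 0 (jac 7)) (psmul (-1) (pprimAux 0 (0 :: pL (jac i)))) =
      padd (psmul (c 0) (jac 0)) (padd (psmul (c 1) (jac 1)) (padd (psmul (c 2) (jac 2))
       (padd (psmul (c 3) (jac 3)) (padd (psmul (c 4) (jac 4)) (padd (psmul (c 5) (jac 5))
       (padd (psmul (c 6) (jac 6)) (psmul (c 7) (jac 7)))))))))
    (R : C(ℝ, ℝ)) :
    ip (pe [0, 1]) (prim (pe (jac i))) (prim R)
      = ∑ j, (c j : ℝ) * ip (pe [0, 1]) (pe (jac j)) R := by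
  have e : pmul [0, 1] (pL (jac i)) = 0 :: pL (jac i) := by
    fin_cases i <;> decide +kernel
  have e2 : pe (psmul (-1) (pprimAux 0 (0 :: pL (jac i)))) = ∑ j, (c j : ℝ) • pe (jac j) := by
    have h' : pe (psmul (-1) (pprimAux 0 (0 :: pL (jac i)))) =
        pe (padd (psmul 0 (jac 7)) (psmul (-1) (pprimAux 0 (0 :: pL (jac i))))) := by
      ext x; rw [pe_padd, pe_psmul 0]; simp
    rw [h', h]
    ext x
    simp only [pe_padd, pe_psmul, Fin.sum_univ_eight, ContinuousMap.add_apply,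
      ContinuousMap.smul_apply, smul_eq_mul]
    ring
  have e3 : pe (psmul (-1) (pprimAux 0 (0 :: pL (jac i))))
      = (-1 : ℝ) • pe (pprimAux 0 (0 :: pL (jac i))) := by
    ext x; simp [pe_psmul]
  rw [ip_prim_pe, ip_id_eq, e]
  have := congrArg (fun f => ip (pe [0, 1]) f R) (e3.symm.trans e2)
  simp only [map_smul, map_sum, LinearMap.smul_apply, LinearMap.sum_apply, smul_eq_mul] at this
  linarith


/-- On functions orthogonal to the constants in `L²(x dx)` the squared norm of `prim` is at most
`89/2500`. The components of degree one to five are treated exactly through their Gram matrix; the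
remainder `R` is controlled by the Hilbert–Schmidt bound `hs`, and interacts with the other
components only through its coefficients `r6`, `r7`. -/
theorem prim_norm_le (A : C(ℝ, ℝ)) (hA : ip (pe [0, 1]) (pe (jac 0)) A = 0) :
    ip (pe [0, 1]) (prim A) (prim A) ≤ 89 / 2500 * ip (pe [0, 1]) A A := by
  have key : ∀ i : Fin 8, ip (pe [0, 1]) A (pe (jac i)) = ip (pe [0, 1]) (pe (jac i)) A :=
    fun i => ip_symm _ _ _
  obtain ⟨a, ha⟩ : ∃ a : Fin 8 → ℝ, a = fun i : Fin 8 =>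
    2 * ((i : ℕ) + 1 : ℝ) * ip (pe [0, 1]) (pe (jac i)) A := ⟨_, rfl⟩
  obtain ⟨R, hRd⟩ : ∃ R : C(ℝ, ℝ), R = A - (a 1 • pe (jac 1) + a 2 • pe (jac 2)
    + a 3 • pe (jac 3) + a 4 • pe (jac 4) + a 5 • pe (jac 5)) := ⟨_, rfl⟩
  have hAR : A = a 1 • pe (jac 1) + a 2 • pe (jac 2)
    + a 3 • pe (jac 3) + a 4 • pe (jac 4) + a 5 • pe (jac 5) + R := by rw [hRd]; abel
  have hR : ∀ i : Fin 6, ip (pe [0, 1]) (pe (jac (i.castLE (by norm_num)))) R = 0 := by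
    intro i
    rw [hRd, ha]
    simp only [map_add, map_sub, map_smul, smul_eq_mul, jac_gram]
    fin_cases i
    · simp [hA]
    all_goals simp [Fin.ext_iff]; ring
  have hR0 : ip (pe [0, 1]) (pe (jac 0)) R = 0 := hR 0
  have hR1 : ip (pe [0, 1]) (pe (jac 1)) R = 0 := hR 1
  have hR2 : ip (pe [0, 1]) (pe (jac 2)) R = 0 := hR 2
  have hR3 : ip (pe [0, 1]) (pe (jac 3)) R = 0 := hR 3
  have hR4 : ip (pe [0, 1]) (pe (jac 4)) R = 0 := hR 4
  have hR5 : ip (pe [0, 1]) (pe (jac 5)) R = 0 := hR 5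
  have tail : ip (pe [0, 1]) (prim R) (prim R) ≤ 1 / 52 * ip (pe [0, 1]) R R := by
    have := hs (pe [0, 1]) ip_pe_nonneg_id
      (fun i : Fin 6 => pe (jac (i.castLE (by norm_num)))) (fun i => 1 / (2 * ((i : ℕ) + 1) : ℝ))
      (fun i => by positivity) (fun i j => by rw [jac_gram]; simp [Fin.ext_iff])
      (fun x => -log x) kernel_id intervalIntegrable_id_mul_neg_log R hR
    rw [integral_id_mul_neg_log] at this
    refine this.trans (le_of_eq ?_)
    congr 1
    simp only [jac_prim_gram, Fin.sum_univ_six, jacPrim, Matrix.cons_val]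
    norm_num
  set r6 := ip (pe [0, 1]) (pe (jac 6)) R with hr6
  set r7 := ip (pe [0, 1]) (pe (jac 7)) R with hr7
  have p1 := ip_prim_jac 1 ![1/60, 1/30, 1/420, -3/280, 0, 0, 0, 0] (by decide +kernel) R
  have p2 := ip_prim_jac 2 ![-1/90, 1/630, 1/70, 1/1890, -1/189, 0, 0, 0] (by decide +kernel) R
  have p3 := ip_prim_jac 3 ![0, -3/560, 1/2520, 1/126, 1/5544, -5/1584, 0, 0] (by decide +kernel) R
  have p4 := ip_prim_jac 4 ![0, 0, -1/315, 1/6930, 1/198, 1/12870, -3/1430, 0] (by decide +kernel) R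
  have p5 := ip_prim_jac 5 ![0, 0, 0, -5/2376, 1/15444, 1/286, 1/25740, -7/4680] (by decide +kernel) R
  simp only [Fin.sum_univ_eight, hR0, hR1, hR2, hR3, hR4, hR5, ← hr6, ← hr7, Matrix.cons_val,
    mul_zero, add_zero, zero_add, Rat.cast_zero, zero_mul] at p1 p2 p3 p4 p5
  have q1 := (ip_symm _ _ _).trans p1
  have q2 := (ip_symm _ _ _).trans p2
  have q3 := (ip_symm _ _ _).trans p3
  have q4 := (ip_symm _ _ _).trans p4
  have q5 := (ip_symm _ _ _).trans p5
  have g11 := jac_prim_val 1 1 1 1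
  have g12 := jac_prim_val 1 2 1 2
  have g13 := jac_prim_val 1 3 1 3
  have g14 := jac_prim_val 1 4 1 4
  have g15 := jac_prim_val 1 5 1 5
  have g21 := jac_prim_val 2 1 2 1
  have g22 := jac_prim_val 2 2 2 2
  have g23 := jac_prim_val 2 3 2 3
  have g24 := jac_prim_val 2 4 2 4
  have g25 := jac_prim_val 2 5 2 5
  have g31 := jac_prim_val 3 1 3 1
  have g32 := jac_prim_val 3 2 3 2
  have g33 := jac_prim_val 3 3 3 3
  have g34 := jac_prim_val 3 4 3 4
  have g35 := jac_prim_val 3 5 3 5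
  have g41 := jac_prim_val 4 1 4 1
  have g42 := jac_prim_val 4 2 4 2
  have g43 := jac_prim_val 4 3 4 3
  have g44 := jac_prim_val 4 4 4 4
  have g45 := jac_prim_val 4 5 4 5
  have g51 := jac_prim_val 5 1 5 1
  have g52 := jac_prim_val 5 2 5 2
  have g53 := jac_prim_val 5 3 5 3
  have g54 := jac_prim_val 5 4 5 4
  have g55 := jac_prim_val 5 5 5 5
  simp only [jacPrim, Matrix.cons_val] at g11 g12 g13 g14 g15 g21 g22 g23 g24 g25 g31 g32 g33 g34 g35 g41 g42 g43 g44 g45 g51 g52 g53 g54 g55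
  -- Bessel's inequality for the degree six and seven components of the remainder
  have bessel : 14 * r6 ^ 2 + 16 * r7 ^ 2 ≤ ip (pe [0, 1]) R R := by
    have := ip_nonneg ip_pe_nonneg_id (R - ((14 * r6) • pe (jac 6) + (16 * r7) • pe (jac 7)))
    simp only [map_sub, map_add, map_smul, LinearMap.add_apply, LinearMap.sub_apply,
      LinearMap.smul_apply, smul_eq_mul, jac_gram, ip_symm _ R (pe _), ← hr6, ← hr7] at this
    simp [Fin.ext_iff] at this
    linarith
  have hL : ip (pe [0, 1]) (prim A) (prim A) =
      (1/120) * a 1 * a 1 + 2 * (1/2520) * a 1 * a 2 + 2 * (-3/2240) * a 1 * a 3 + (1/420) * a 2 * a 2 + 2 * (1/15120) * a 2 * a 3 + 2 * (-1/1890) * a 2 * a 4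
      + (1/1008) * a 3 * a 3 + 2 * (1/55440) * a 3 * a 4 + 2 * (-5/19008) * a 3 * a 5 + (1/1980) * a 4 * a 4 + 2 * (1/154440) * a 4 * a 5 + (1/3432) * a 5 * a 5
      + 2 * a 4 * (-3 / 1430 * r6) + 2 * a 5 * (1 / 25740 * r6 - 7 / 4680 * r7)
      + ip (pe [0, 1]) (prim R) (prim R) := by
    rw [hAR]
    simp only [map_add, map_smul, LinearMap.add_apply, LinearMap.smul_apply, smul_eq_mul,
      p1, p2, p3, p4, p5, q1, q2, q3, q4, q5, g11, g12, g13, g14, g15, g21, g22, g23, g24, g25, g31, g32, g33, g34, g35, g41, g42, g43, g44, g45, g51, g52, g53, g54, g55]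
    push_cast
    ring
  have hI : ip (pe [0, 1]) A A = a 1 ^ 2 / 4 + a 2 ^ 2 / 6 + a 3 ^ 2 / 8 + a 4 ^ 2 / 10 + a 5 ^ 2 / 12 + ip (pe [0, 1]) R R := by
    rw [hAR]
    simp only [map_add, map_smul, LinearMap.add_apply, LinearMap.smul_apply, smul_eq_mul,
      jac_gram, ip_symm _ R (pe _), hR1, hR2, hR3, hR4, hR5]
    simp [Fin.ext_iff]
    ring
  -- the remaining quadratic form in the coefficients is a sum of squares
  rw [hL, hI]
  clear hL hI hAR hRd
  linarith [tail, bessel,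
        mul_nonneg (by norm_num : (0:ℝ) ≤ 17/30000) (sq_nonneg (a 1 + (-250/357) * a 2 + (1125/476) * a 3)),
        mul_nonneg (by norm_num : (0:ℝ) ≤ 368233/112455000) (sq_nonneg (a 2 + (392125/1472932) * a 3 + (59500/368233) * a 4)),
        mul_nonneg (by norm_num : (0:ℝ) ≤ 96294317/1590766560000) (sq_nonneg (a 3 + (-397202000/151319641) * a 4 + (4602912500/1059237487) * a 5)),
        mul_nonneg (by norm_num : (0:ℝ) ≤ 106211492289/41612901275000) (sq_nonneg (a 4 + (52860488125/197249914251) * a 5 + (378299102500/460249799919) * r6)),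
        mul_nonneg (by norm_num : (0:ℝ) ≤ 181595331981431/134623066476307500) (sq_nonneg (a 5 + (-80916719359875/181595331981431) * r6 + (402718574929125/363190663962862) * r7)),
        mul_nonneg (by norm_num : (0:ℝ) ≤ 2165850311069152921/9533754929025127500) (sq_nonneg (r6 + (165204968693078125/56312108087797975946) * r7)),
        mul_nonneg (by norm_num : (0:ℝ) ≤ 59536220845753668406544/228767939106679277280625) (sq_nonneg (r7))]

/-! ### The one-dimensional inequality for the even part -/

/-- The averaging operator `f ↦ (x ↦ ∫₀¹ v f(xv) dv)`. -/
def avg (f : C(ℝ, ℝ)) : C(ℝ, ℝ) :=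
  ⟨fun x => ∫ v in (0:ℝ)..1, v * f (x * v),
    intervalIntegral.continuous_parametric_intervalIntegral_of_continuous' (by fun_prop) _ _⟩

theorem avg_eq (f : C(ℝ, ℝ)) (x : ℝ) : x ^ 2 * avg f x = ∫ t in (0:ℝ)..x, t * f t := by
  have := intervalIntegral.smul_integral_comp_mul_left (fun t => t * f t) (a := 0) (b := 1) x
  rw [mul_zero, mul_one] at this
  rw [← this, avg, ContinuousMap.coe_mk, smul_eq_mul, sq, mul_assoc,
    ← intervalIntegral.integral_const_mul]
  congr 2; ext v; ring

theorem avg_hasDerivAt (f : C(ℝ, ℝ)) (x : ℝ) :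
    HasDerivAt (fun x => x ^ 2 * avg f x) (x * f x) x := by
  simp only [avg_eq]
  exact intervalIntegral.integral_hasDerivAt_right
    (Continuous.intervalIntegrable (by fun_prop) _ _)
    (Continuous.stronglyMeasurableAtFilter (by fun_prop) _ _) (by fun_prop)

/-- `prim* prim`, the adjoint being taken in the weighted space `L²(x dx)`. -/
def ll (A : C(ℝ, ℝ)) : C(ℝ, ℝ) := - (pe [0, 1] * avg (prim A))

theorem ip_ll (A g : C(ℝ, ℝ)) : ip (pe [0, 1]) (prim A) (prim g) = ip (pe [0, 1]) (ll A) g := by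
  rw [parts (K := pe [0, 0, 1] * avg (prim A)), ip_apply, ← intervalIntegral.integral_neg]
  · congr 1; ext x
    simp only [ll, pe_cons, pe_nil, ContinuousMap.mul_apply, ContinuousMap.neg_apply]
    push_cast; ring
  · intro x
    have := avg_hasDerivAt (prim A) x
    convert this using 1
    · ext x; simp only [pe_cons, pe_nil, ContinuousMap.mul_apply]; push_cast; ring
    · simp [pe_cons, pe_nil]
  · simp [pe_cons]

/-- For `A` orthogonal to the constants, the mean-zero component of `ll A` is bounded by applying
`prim_norm_le` twice, and its mean is bounded directly. -/
theorem ll_bound (A : C(ℝ, ℝ)) (hA : ip (pe [0, 1]) (pe (jac 0)) A = 0) :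
    ip (pe [0, 1]) (ll A) (ll A) ≤ (89 / 2500) / 16.2 * ip (pe [0, 1]) A A := by
  have hj : jac 0 = [1] := rfl
  obtain ⟨c, hc⟩ : ∃ c, c = ip (pe [0, 1]) (pe (jac 0)) (ll A) := ⟨_, rfl⟩
  have hc2 : c ^ 2 ≤ 1 / 2160 * ip (pe [0, 1]) A A := by
    have h1 : c = ip (pe [0, 1]) (pe [-1/6, 1/2, -1/3]) A := by
      rw [hc, ip_symm, ← ip_ll, ip_symm, ip_prim_pe, ip_id_eq, hj,
        show pmul [0, 1] (pL [1]) = [0, -1, 1] by decide +kernel,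
        show pprimAux 0 [0, -1, 1] = [0, -1/2, 1/3] by decide +kernel]
      have : pe [-1/6, 1/2, -1/3] = (-1/6 : ℝ) • pe (jac 0) - pe [0, -1/2, 1/3] := by
        ext x; simp [pe_cons, pe_nil, hj]; ring
      rw [this, map_sub, map_smul, LinearMap.sub_apply, LinearMap.smul_apply, hA]; simp
    have h2 := ip_cs ip_pe_nonneg_id (pe [-1/6, 1/2, -1/3]) A
    rw [← h1, ip_pe, show (pint 0 (pmul [0, 1] (pmul [-1/6, 1/2, -1/3] [-1/6, 1/2, -1/3])))
      = 1 / 2160 by decide +kernel] at h2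
    push_cast at h2; exact h2
  have h00 : ip (pe [0, 1]) (pe (jac 0)) (pe (jac 0)) = 1 / 2 := by rw [jac_gram]; norm_num
  obtain ⟨Z, hZ⟩ : ∃ Z, Z = ll A - (2 * c) • pe (jac 0) := ⟨_, rfl⟩
  have hZ0 : ip (pe [0, 1]) (pe (jac 0)) Z = 0 := by
    rw [hZ, map_sub, map_smul, h00, ← hc, smul_eq_mul]; ring
  have hBZ : ll A = Z + (2 * c) • pe (jac 0) := by rw [hZ]; abel
  have hZZ : ip (pe [0, 1]) Z Z ≤ (89 / 2500) ^ 2 * ip (pe [0, 1]) A A := by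
    have e : ip (pe [0, 1]) Z Z = ip (pe [0, 1]) (prim A) (prim Z) := by
      rw [ip_ll, hBZ, map_add, map_smul, LinearMap.add_apply, LinearMap.smul_apply, hZ0]; simp
    have h1 := ip_cs ip_pe_nonneg_id (prim A) (prim Z)
    have h2 := prim_norm_le A hA
    have h3 := prim_norm_le Z hZ0
    have h4 := ip_nonneg ip_pe_nonneg_id (prim Z)
    have h5 := ip_nonneg ip_pe_nonneg_id Z
    have h6 := ip_nonneg ip_pe_nonneg_id A
    have h7 : ip (pe [0, 1]) (prim A) (prim A) * ip (pe [0, 1]) (prim Z) (prim Z) ≤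
        (89 / 2500 * ip (pe [0, 1]) A A) * (89 / 2500 * ip (pe [0, 1]) Z Z) := by
      gcongr
    rw [← e] at h1
    rcases h5.eq_or_lt with h | h
    · rw [← h]; positivity
    · by_contra! hh
      nlinarith
  rw [hBZ]
  simp only [map_add, map_smul, LinearMap.add_apply, LinearMap.smul_apply, hZ0, h00,
    ip_symm _ Z (pe (jac 0)), smul_eq_mul]
  have h6 := ip_nonneg ip_pe_nonneg_id A
  linarith

/-- The polynomial form of the Riccati inequality used in `jacobi`, in the variable `y = s²`. -/
theorem jacobi_poly (y : ℝ) (h0 : 0 ≤ y) (h1 : y ≤ 1) :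
    y * (0.503 - 0.306 * y - 0.0309 * y ^ 2) ^ 2 ≤ (0.345 - 0.2 * y - 0.06 * y ^ 2) *
      ((1.006 - 1.224 * y - 0.1854 * y ^ 2) * (1 - 0.99 * y)
        + 1.98 * (y * (0.503 - 0.306 * y - 0.0309 * y ^ 2)) - (1 - 0.99 * y) ^ 2) := by
  have h2 : 0 ≤ 1 - y := by linarith
  have b0 : 0 ≤ (1 - y) ^ 6 := by positivity
  have b1 : 0 ≤ y * (1 - y) ^ 5 := by positivity
  have b2 : 0 ≤ y ^ 2 * (1 - y) ^ 4 := by positivity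
  have b3 : 0 ≤ y ^ 3 * (1 - y) ^ 3 := by positivity
  have b4 : 0 ≤ y ^ 4 * (1 - y) ^ 2 := by positivity
  have b5 : 0 ≤ y ^ 5 * (1 - y) := by positivity
  have b6 : 0 ≤ y ^ 6 := by positivity
  linarith

/-- With `p = 0.345 - s²/5 - 3s⁴/50`, the claim is `∫ s (prim τ)² ≤ ∫ s p τ²`. Adding the derivative of
`h (prim τ)²`, where `h = (0.503 s² - 0.306 s⁴ - 0.0309 s⁶)/(1 - 0.99 s²)` approximately solves the
Riccati equation of this variational problem, makes the integrand pointwise nonnegative; the boundary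
terms vanish because `h 0 = 0` and `prim τ 1 = 0`. -/
theorem jacobi (τ : C(ℝ, ℝ)) :
    ip (pe [0, 1]) (pe [0, 0, 1/5, 0, 3/50] * τ) τ + ip (pe [0, 1]) (prim τ) (prim τ)
      ≤ 0.345 * ip (pe [0, 1]) τ τ := by
  set hn : ℝ → ℝ := fun s => 0.503 * s ^ 2 - 0.306 * s ^ 4 - 0.0309 * s ^ 6 with hhn
  set hn' : ℝ → ℝ := fun s => 1.006 * s - 1.224 * s ^ 3 - 0.1854 * s ^ 5 with hhn'
  set D : ℝ → ℝ := fun s => 1 - 0.99 * s ^ 2 with hD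
  set h' : ℝ → ℝ := fun s => (hn' s * D s - hn s * (-(1.98 * s))) / D s ^ 2 with hh'
  have Dpos : ∀ s ∈ Set.Icc (0:ℝ) 1, 0 < D s := by
    intro s hs; simp only [hD]; nlinarith [hs.1, hs.2]
  have hd : ∀ s ∈ Set.Icc (0:ℝ) 1, HasDerivAt (fun s => hn s / D s * (prim τ s) ^ 2)
      (h' s * (prim τ s) ^ 2 + hn s / D s * (2 * prim τ s * τ s)) s := by
    intro s hs
    have e1 : HasDerivAt hn (hn' s) s := by
      have := (((hasDerivAt_id s).pow 2).const_mul 0.503).sub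
        (((hasDerivAt_id s).pow 4).const_mul 0.306) |>.sub
          (((hasDerivAt_id s).pow 6).const_mul 0.0309)
      refine this.congr_deriv ?_
      simp only [hhn', id]; push_cast; ring
    have e2 : HasDerivAt D (-(1.98 * s)) s := by
      have := (((hasDerivAt_id s).pow 2).const_mul 0.99).const_sub 1
      refine this.congr_deriv ?_
      simp only [id]; push_cast; ring
    have := (e1.div e2 (Dpos s hs).ne').mul ((prim_hasDerivAt τ s).pow 2)
    refine this.congr_deriv ?_
    simp only [hh', Pi.pow_apply, Pi.div_apply]; push_cast; ring
  have hcont : ContinuousOn (fun s => h' s * (prim τ s) ^ 2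
      + hn s / D s * (2 * prim τ s * τ s)) (Set.Icc 0 1) := by
    have c1 : ContinuousOn D (Set.Icc 0 1) := by fun_prop
    have c2 : ContinuousOn hn (Set.Icc 0 1) := by fun_prop
    have c3 : ContinuousOn hn' (Set.Icc 0 1) := by fun_prop
    have c4 : ContinuousOn h' (Set.Icc 0 1) := by
      apply ContinuousOn.div (by fun_prop) (by fun_prop)
      intro s hs; have := Dpos s hs; positivity
    have c5 : ContinuousOn (fun s => hn s / D s) (Set.Icc 0 1) :=
      c2.div c1 (fun s hs => (Dpos s hs).ne')
    fun_prop
  have hii : IntervalIntegrable (fun s => h' s * (prim τ s) ^ 2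
      + hn s / D s * (2 * prim τ s * τ s)) volume 0 1 :=
    ContinuousOn.intervalIntegrable (by rwa [Set.uIcc_of_le zero_le_one])
  have hint := intervalIntegral.integral_eq_sub_of_hasDerivAt (fun s hs => hd s
    (by rwa [Set.uIcc_of_le zero_le_one] at hs)) hii
  have h0 : hn 0 = 0 := by simp [hhn]
  rw [prim_one, h0] at hint
  have key : 0 ≤ ∫ s in (0:ℝ)..1, ((s * (0.345 - (1/5 * s ^ 2 + 3/50 * s ^ 4)) * τ s ^ 2
      - s * prim τ s ^ 2) + (h' s * (prim τ s) ^ 2 + hn s / D s * (2 * prim τ s * τ s))) := by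
    apply intervalIntegral.integral_nonneg zero_le_one
    intro s hs
    have hDs := Dpos s hs
    have hp := jacobi_poly (s ^ 2) (by positivity) (by nlinarith [hs.1, hs.2])
    have hs0 := hs.1
    have hs2 : s ^ 2 ≤ 1 := by nlinarith [hs.1, hs.2]
    set p : ℝ := 0.345 - (1/5 * s ^ 2 + 3/50 * s ^ 4) with hpd
    have hppos : 0 < p := by nlinarith
    rcases hs0.eq_or_lt with h | hspos
    · rw [← h]; simp [hhn, hh', hhn']
    have hq : (hn s / D s) ^ 2 ≤ s * p * (h' s - s) := by
      rw [div_pow, hh']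
      rw [div_le_iff₀ (by positivity)]
      have : s * p * ((hn' s * D s - hn s * (-(1.98 * s))) / D s ^ 2 - s) * D s ^ 2 =
        s * p * ((hn' s * D s - hn s * (-(1.98 * s))) - s * D s ^ 2) := by
        field_simp
      simp only [this]
      have := mul_le_mul_of_nonneg_left hp (sq_nonneg s)
      simp only [hhn, hhn', hD, hpd]
      linarith
    have hsp : 0 < s * p := by positivity
    generalize hn s / D s = H at hq ⊢
    have : 0 ≤ (s * p) * (s * p * τ s ^ 2 - s * prim τ s ^ 2 +
        (h' s * prim τ s ^ 2 + H * (2 * prim τ s * τ s))) := by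
      nlinarith [sq_nonneg (s * p * τ s + H * prim τ s), mul_le_mul_of_nonneg_right hq
        (sq_nonneg (prim τ s))]
    exact nonneg_of_mul_nonneg_right this hsp
  rw [intervalIntegral.integral_add (Continuous.intervalIntegrable (by fun_prop) _ _) hii, hint]
    at key
  have e : ∫ s in (0:ℝ)..1, (s * (0.345 - (1/5 * s ^ 2 + 3/50 * s ^ 4)) * τ s ^ 2
      - s * prim τ s ^ 2) = 0.345 * ip (pe [0, 1]) τ τ -
      (ip (pe [0, 1]) (pe [0, 0, 1/5, 0, 3/50] * τ) τ + ip (pe [0, 1]) (prim τ) (prim τ)) := by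
    simp only [ip_apply]
    rw [← intervalIntegral.integral_const_mul, ← intervalIntegral.integral_add
      (Continuous.intervalIntegrable (by fun_prop) _ _)
      (Continuous.intervalIntegrable (by fun_prop) _ _),
      ← intervalIntegral.integral_sub (Continuous.intervalIntegrable (by fun_prop) _ _)
      (Continuous.intervalIntegrable (by fun_prop) _ _)]
    congr 1; ext s
    simp [pe_cons, pe_nil]; ring
  rw [e] at key
  simp at key
  linarith

/-- The terms in `A` alone are bounded by `prim_norm_le`, those in `τ` alone by `jacobi`, and the mixed
term `2 ⟨ll A, τ⟩` by completing the square with `ll_bound`. -/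
theorem even_oneD (A τ : C(ℝ, ℝ)) (hA : ip (pe [0, 1]) (pe (jac 0)) A = 0) (ka kb : ℝ)
    (h2 : 0 < 3 * (89 / 2500) * kb - 0.345)
    (h3 : 1 ≤ (ka - 1) * ((3 * (89 / 2500) * kb - 0.345) * 16.2)) :
    ip (pe [0, 1]) (prim (A + τ)) (prim (A + τ)) +
      ip (pe [0, 1]) (pe [0, 0, 1/5, 0, 3/50] * τ) τ ≤
    89 / 2500 * ka * ip (pe [0, 1]) A A + 3 * (89 / 2500) * kb * ip (pe [0, 1]) τ τ := by
  have hi := prim_norm_le A hA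
  have hj := jacobi τ
  have hl := ll_bound A hA
  simp only [map_add, LinearMap.add_apply, ip_symm _ (prim τ) (prim A), ip_ll A τ]
  set γ := 3 * (89 / 2500) * kb - 0.345 with hγ
  have hs := ip_nonneg ip_pe_nonneg_id (γ • τ - ll A)
  simp only [map_sub, map_smul, LinearMap.sub_apply, LinearMap.smul_apply, smul_eq_mul,
    ip_symm _ τ (ll A)] at hs
  have hA0 := ip_nonneg ip_pe_nonneg_id A
  have h4 : ip (pe [0, 1]) (ll A) (ll A) ≤ γ * (89 / 2500 * (ka - 1) * ip (pe [0, 1]) A A) := by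
    refine hl.trans ?_
    have := mul_le_mul_of_nonneg_right h3 hA0
    linarith
  have h5 : 0 ≤ γ * (γ * ip (pe [0, 1]) τ τ - 2 * ip (pe [0, 1]) (ll A) τ +
      89 / 2500 * (ka - 1) * ip (pe [0, 1]) A A) := by linarith
  have h6 := nonneg_of_mul_nonneg_right h5 h2
  have h7 : γ * ip (pe [0, 1]) τ τ = 3 * (89 / 2500) * kb * ip (pe [0, 1]) τ τ
    - 0.345 * ip (pe [0, 1]) τ τ := by rw [hγ]; ring
  linarith

/-! ### Inequalities on a single slice -/

theorem ip_pe_prim (l : List ℚ) (g : C(ℝ, ℝ)) :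
    ip (pe [1]) (pe l) (prim g) = - ip (pe [1]) (pe (0 :: pprimAux 0 l)) g := by
  rw [parts (K := pe (0 :: pprimAux 0 l)) _ (by simp [pe_cons]), ip_apply]
  · congr 2; ext x; simp [pe_cons, pe_nil]
  · intro x
    have := pe_hasDerivAt l x
    simpa [pe_cons, pe_nil] using this

theorem ip_pe_val (w l m : List ℚ) (q : ℚ) (h : pint 0 (pmul w (pmul l m)) = q := by decide +kernel) :
    ip (pe w) (pe l) (pe m) = q := by
  rw [ip_pe, h]

theorem pe_zero_of (l : List ℚ) (h : ∀ c ∈ l, c = 0) : pe l = 0 := by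
  induction l with
  | nil => rfl
  | cons a l ih =>
    ext x
    rw [pe_cons, ih (fun c hc => h c (by simp [hc])), h a (by simp)]
    simp

/-- Linear relations between polynomials are checked on coefficients. -/
theorem pe_lin3 (p a b c : List ℚ) (x y z : ℚ)
    (h : ∀ q ∈ padd p (psmul (-1) (padd (psmul x a) (padd (psmul y b) (psmul z c)))), q = 0) :
    pe p = (x : ℝ) • pe a + ((y : ℝ) • pe b + (z : ℝ) • pe c) := by
  have := pe_zero_of _ h
  ext t
  have := congrArg (fun f : C(ℝ, ℝ) => f t) this
  simp only [pe_padd, pe_psmul, ContinuousMap.zero_apply] at this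
  simp only [ContinuousMap.add_apply, ContinuousMap.smul_apply, smul_eq_mul]
  push_cast at this
  linarith

theorem ip_lin3 (p a b c : List ℚ) (x y z : ℚ) (g : C(ℝ, ℝ))
    (h : ∀ q ∈ padd p (psmul (-1) (padd (psmul x a) (padd (psmul y b) (psmul z c)))), q = 0) :
    ip (pe [1]) (pe p) g = x * ip (pe [1]) (pe a) g + (y * ip (pe [1]) (pe b) g
      + z * ip (pe [1]) (pe c) g) := by
  rw [pe_lin3 p a b c x y z h]
  simp only [map_add, map_smul, LinearMap.add_apply, LinearMap.smul_apply, smul_eq_mul]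

/-- The Legendre polynomials of degree at most five (and `0` beyond). On `[0,1]`, those of the same
parity are orthogonal. -/
def leg : ℕ → List ℚ
  | 0 => [1]
  | 1 => [0, 1]
  | 2 => [-1/2, 0, 3/2]
  | 3 => [0, -3/2, 0, 5/2]
  | 4 => [3/8, 0, -15/4, 0, 35/8]
  | 5 => [0, 15/8, 0, -35/4, 0, 63/8]
  | _ => []

theorem integral_one_sub : ∫ x in (0:ℝ)..1, pe [1] x * (1 - x) = 1 / 2 := by
  have : ∀ x : ℝ, pe [1] x * (1 - x) = x ^ 0 * pe [1, -1] x := by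
    intro x; simp [pe_cons, pe_nil]; ring
  simp only [this]
  rw [integral_pe, show pint 0 [1, -1] = 1 / 2 by decide +kernel]; norm_num

/-- The elementary inequality behind `even_slice`: `τ` and `l` are the first and third Legendre moments,
`π5` the fifth moment of the remainder, and `RR`, `PR` the squared norms of the remainder and of its
primitive. -/
theorem even_arith (y kb τ l π5 RR PR : ℝ) (hy0 : 0 ≤ y) (hy1 : y ≤ 1) (hk : 0.1424 ≤ kb)
    (hRn : 0 ≤ RR) (hPn : 0 ≤ PR) (bessel : 11 * π5 ^ 2 ≤ RR) (tail : PR ≤ 1 / 18 * RR) :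
    y * (6 / 5 * τ ^ 2 - 2 / 35 * τ * l + 2 / 315 * l ^ 2 - 2 / 63 * l * π5 + PR - τ ^ 2)
      + (3 * kb - 0.2 * y - 0.06 * y ^ 2) * τ ^ 2 ≤ kb * (3 * τ ^ 2 + l ^ 2 / 7 + RR) := by
  have e1 : y * PR ≤ 1 / 18 * RR := (mul_le_of_le_one_left hPn hy1).trans tail
  have e2 : 0 ≤ 0.06 * (y * τ) ^ 2 + 2 / 35 * (y * τ) * l + 0.01361 * l ^ 2 := by
    nlinarith [sq_nonneg (0.06 * (y * τ) + 1 / 35 * l), sq_nonneg l]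
  have e3 : 0 ≤ 0.955 * π5 ^ 2 + 2 / 63 * (y * l) * π5 + 0.000265 * (y * l) ^ 2 := by
    nlinarith [sq_nonneg (0.955 * π5 + 1 / 63 * (y * l)), sq_nonneg (y * l)]
  have e4 : (y * l) ^ 2 ≤ l ^ 2 := by
    rw [mul_pow]
    exact mul_le_of_le_one_left (sq_nonneg l) (pow_le_one₀ hy0 hy1)
  have e5 : y * l ^ 2 ≤ l ^ 2 := mul_le_of_le_one_left (sq_nonneg l) hy1
  have e6 : 0 ≤ (kb - 0.1424) * (l ^ 2 / 7 + RR) := by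
    apply mul_nonneg (by linarith); positivity
  linarith [sq_nonneg l]

/-- The elementary inequality behind `odd_slice`, with the notation of `even_arith` for the even Legendre
moments. -/
theorem odd_arith (y kb c2 z r π4 RR PR : ℝ) (hy1 : y ≤ 1)
    (hk : 1 / 14 < kb) (hc : 1 / 441 ≤ (kb - 1 / 14) * c2)
    (hPn : 0 ≤ PR) (bessel : 9 * π4 ^ 2 ≤ RR) (tail : PR ≤ 1 / 14 * RR) :
    kb * (z ^ 2 + 2 * z * r + 6 * r ^ 2) - y * (z ^ 2 / 3) - r ^ 2 * (y / 7 + c2 * y ^ 2)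
      ≤ kb * ((z + r) ^ 2 + 5 * r ^ 2 + RR)
        - y * (z ^ 2 / 3 + r ^ 2 / 7 - 2 / 7 * r * π4 + PR) := by
  have e1 : y * PR ≤ 1 / 14 * RR := (mul_le_of_le_one_left hPn hy1).trans tail
  set k := kb - 1 / 14 with hkd
  have hk0 : 0 < k := by linarith
  have e2 := mul_le_mul_of_nonneg_left bessel hk0.le
  have e3 : 0 ≤ (9 * k) * (9 * k * π4 ^ 2 + 2 / 7 * y * r * π4 + c2 * (y * r) ^ 2) := by
    linarith [sq_nonneg (9 * k * π4 + 1 / 7 * (y * r)), mul_le_mul_of_nonneg_right hc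
      (sq_nonneg (y * r))]
  have e4 := nonneg_of_mul_nonneg_right e3 (by positivity)
  have e5 : kb * RR = k * RR + 1 / 14 * RR := by rw [hkd]; ring
  linarith

/-- Lower bound for the `∂_t`-energy of an even slice, given the moment `τ = ∫₀¹ t f`, where `f` is odd in
`t` and `y = s²`. The slice is expanded in odd Legendre polynomials, and the remainder is treated by
`hs` and by Bessel's inequality. -/
theorem even_slice (f : C(ℝ, ℝ)) (y kb : ℝ) (hy0 : 0 ≤ y) (hy1 : y ≤ 1) (hk : 0.1424 ≤ kb) :
    y * (ip (pe [1]) (prim f) (prim f) - ip (pe [1]) (pe [0, 1]) f ^ 2)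
      + (3 * kb - 0.2 * y - 0.06 * y ^ 2) * ip (pe [1]) (pe [0, 1]) f ^ 2
      ≤ kb * ip (pe [1]) f f := by
  change y * (ip (pe [1]) (prim f) (prim f) - ip (pe [1]) (pe (leg 1)) f ^ 2)
      + (3 * kb - 0.2 * y - 0.06 * y ^ 2) * ip (pe [1]) (pe (leg 1)) f ^ 2 ≤ _
  have g11 := ip_pe_val [1] (leg 1) (leg 1) (1/3)
  have g13 := ip_pe_val [1] (leg 1) (leg 3) 0
  have g31 := ip_pe_val [1] (leg 3) (leg 1) 0
  have g33 := ip_pe_val [1] (leg 3) (leg 3) (1/7)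
  have g15 := ip_pe_val [1] (leg 1) (leg 5) 0
  have g35 := ip_pe_val [1] (leg 3) (leg 5) 0
  have g55 := ip_pe_val [1] (leg 5) (leg 5) (1/11)
  have l11 := ip_pe_val [1] (pL (leg 1)) (pL (leg 1)) (2/15)
  have l13 := ip_pe_val [1] (pL (leg 1)) (pL (leg 3)) (-1/105)
  have l33 := ip_pe_val [1] (pL (leg 3)) (pL (leg 3)) (2/315)
  simp only [← prim_pe] at l11 l13 l33
  obtain ⟨τ, hτ⟩ : ∃ τ, τ = ip (pe [1]) (pe (leg 1)) f := ⟨_, rfl⟩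
  obtain ⟨l, hl⟩ : ∃ l, l = 7 * ip (pe [1]) (pe (leg 3)) f := ⟨_, rfl⟩
  obtain ⟨R, hR⟩ : ∃ R, R = f - ((3 * τ) • pe (leg 1) + l • pe (leg 3)) := ⟨_, rfl⟩
  have hf : f = (3 * τ) • pe (leg 1) + l • pe (leg 3) + R := by rw [hR]; abel
  have hR1 : ip (pe [1]) (pe (leg 1)) R = 0 := by
    rw [hR]; simp only [map_sub, map_add, map_smul, smul_eq_mul, g11, g13, ← hτ]; push_cast; ring
  have hR3 : ip (pe [1]) (pe (leg 3)) R = 0 := by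
    rw [hR]; simp only [map_sub, map_add, map_smul, smul_eq_mul, g31, g33, hl]; push_cast; ring
  obtain ⟨π5, hπ⟩ : ∃ π5, π5 = ip (pe [1]) (pe (leg 5)) R := ⟨_, rfl⟩
  have bessel : 11 * π5 ^ 2 ≤ ip (pe [1]) R R := by
    have := ip_nonneg ip_pe_nonneg_one (R - (11 * π5) • pe (leg 5))
    simp only [map_sub, map_smul, LinearMap.sub_apply, LinearMap.smul_apply, smul_eq_mul, g55,
      ip_symm _ R (pe _), ← hπ] at this
    push_cast at this
    linarith
  have c1 : ip (pe [1]) (prim (pe (leg 1))) (prim R) = 0 := by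
    rw [prim_pe, ip_pe_prim, ip_lin3 _ (leg 1) (leg 3) (leg 5) (-2/5) (1/15) 0 R
      (by decide +kernel), hR1, hR3]; simp
  have c3 : ip (pe [1]) (prim (pe (leg 3))) (prim R) = - (π5 / 63) := by
    rw [prim_pe, ip_pe_prim, ip_lin3 _ (leg 1) (leg 3) (leg 5) (1/35) (-2/45) (1/63) R
      (by decide +kernel), hR1, hR3, ← hπ]; push_cast; ring
  have tail : ip (pe [1]) (prim R) (prim R) ≤ 1 / 18 * ip (pe [1]) R R := by
    have := hs (pe [1]) ip_pe_nonneg_one ![pe (leg 1), pe (leg 3)] ![1/3, 1/7]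
      (fun i => by fin_cases i <;> simp)
      (fun i j => by fin_cases i <;> fin_cases j <;> simp [g11, g13, g31, g33])
      (fun x => 1 - x) kernel_one (Continuous.intervalIntegrable (by fun_prop) _ _) R
      (fun i => by fin_cases i <;> simp [hR1, hR3])
    rw [integral_one_sub] at this
    refine this.trans (le_of_eq ?_)
    congr 1
    simp [l11, l33]
    norm_num
  have hff : ip (pe [1]) f f = 3 * τ ^ 2 + l ^ 2 / 7 + ip (pe [1]) R R := by
    rw [hf]
    simp only [map_add, map_smul, LinearMap.add_apply, LinearMap.smul_apply, smul_eq_mul,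
      g11, g13, g31, g33, hR1, hR3, ip_symm _ R (pe _)]
    push_cast; ring
  have hpp : ip (pe [1]) (prim f) (prim f) = 6 / 5 * τ ^ 2 - 2 / 35 * τ * l + 2 / 315 * l ^ 2
      - 2 / 63 * l * π5 + ip (pe [1]) (prim R) (prim R) := by
    rw [hf]
    simp only [map_add, map_smul, LinearMap.add_apply, LinearMap.smul_apply, smul_eq_mul,
      l11, l13, l33, c1, c3, ip_symm _ (prim R) (prim (pe _)),
      ip_symm _ (prim (pe (leg 3))) (prim (pe (leg 1)))]
    push_cast; ring
  rw [← hτ, hff, hpp]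
  have hRn := ip_nonneg ip_pe_nonneg_one R
  have hPn := ip_nonneg ip_pe_nonneg_one (prim R)
  generalize ip (pe [1]) R R = RR at *
  generalize ip (pe [1]) (prim R) (prim R) = PR at *
  exact even_arith y kb τ l π5 RR PR hy0 hy1 hk hRn hPn bessel tail

/-- The analogue of `even_slice` for an odd slice, where `f` is even in `t`: the moments of degree at most
two, `r` and `z`, are kept as variables, and `prim f + (z + r)` is the primitive of `f` vanishing
at `0`. -/
theorem odd_slice (f : C(ℝ, ℝ)) (y kb c2 z r : ℝ) (hy1 : y ≤ 1)
    (hk : 1 / 14 < kb) (hc : 1 / 441 ≤ (kb - 1 / 14) * c2)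
    (hr : r = ip (pe [1]) (pe [-1/2, 0, 3/2]) f) (hz : z = ip (pe [1]) (pe [3/2, 0, -3/2]) f) :
    kb * (z ^ 2 + 2 * z * r + 6 * r ^ 2) - y * (z ^ 2 / 3) - r ^ 2 * (y / 7 + c2 * y ^ 2)
      ≤ kb * ip (pe [1]) f f
        - y * ip (pe [1]) (prim f + (z + r) • pe [1]) (prim f + (z + r) • pe [1]) := by
  change r = ip (pe [1]) (pe (leg 2)) f at hr
  change _ ≤ kb * ip (pe [1]) f f
        - y * ip (pe [1]) (prim f + (z + r) • pe (leg 0)) (prim f + (z + r) • pe (leg 0))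
  have g00 := ip_pe_val [1] (leg 0) (leg 0) 1
  have g02 := ip_pe_val [1] (leg 0) (leg 2) 0
  have g20 := ip_pe_val [1] (leg 2) (leg 0) 0
  have g22 := ip_pe_val [1] (leg 2) (leg 2) (1/5)
  have g44 := ip_pe_val [1] (leg 4) (leg 4) (1/9)
  have l00 := ip_pe_val [1] (pL (leg 0)) (pL (leg 0)) (1/3)
  have l22 := ip_pe_val [1] (pL (leg 2)) (pL (leg 2)) (2/105)
  have m11 := ip_pe_val [1] (leg 1) (leg 1) (1/3)
  have m13 := ip_pe_val [1] (leg 1) (leg 3) 0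
  have m33 := ip_pe_val [1] (leg 3) (leg 3) (1/7)
  simp only [← prim_pe] at l00 l22
  have hzr : z + r = ip (pe [1]) (pe (leg 0)) f := by
    rw [hr, hz, ip_lin3 [3/2, 0, -3/2] (leg 0) (leg 2) (leg 4) 1 (-1) 0 f (by decide +kernel)]
    push_cast; ring
  obtain ⟨R, hR⟩ : ∃ R, R = f - ((z + r) • pe (leg 0) + (5 * r) • pe (leg 2)) := ⟨_, rfl⟩
  have hf : f = (z + r) • pe (leg 0) + (5 * r) • pe (leg 2) + R := by rw [hR]; abel
  have hR0 : ip (pe [1]) (pe (leg 0)) R = 0 := by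
    rw [hR]; simp only [map_sub, map_add, map_smul, smul_eq_mul, g00, g02, ← hzr]; push_cast; ring
  have hR2 : ip (pe [1]) (pe (leg 2)) R = 0 := by
    rw [hR]; simp only [map_sub, map_add, map_smul, smul_eq_mul, g20, g22, ← hr]; push_cast; ring
  obtain ⟨π4, hπ⟩ : ∃ π4, π4 = ip (pe [1]) (pe (leg 4)) R := ⟨_, rfl⟩
  have bessel : 9 * π4 ^ 2 ≤ ip (pe [1]) R R := by
    have := ip_nonneg ip_pe_nonneg_one (R - (9 * π4) • pe (leg 4))
    simp only [map_sub, map_smul, LinearMap.sub_apply, LinearMap.smul_apply, smul_eq_mul, g44,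
      ip_symm _ R (pe _), ← hπ] at this
    push_cast at this
    linarith
  have c1 : ip (pe [1]) (pe (leg 1)) (prim R) = 0 := by
    rw [ip_pe_prim, ip_lin3 _ (leg 0) (leg 2) (leg 4) (1/6) (1/3) 0 R
      (by decide +kernel), hR0, hR2]; simp
  have c3 : ip (pe [1]) (pe (leg 3)) (prim R) = - (π4 / 7) := by
    rw [ip_pe_prim, ip_lin3 _ (leg 0) (leg 2) (leg 4) (-1/8) (-1/7) (1/7) R
      (by decide +kernel), hR0, hR2, ← hπ]; push_cast; ring
  have tail : ip (pe [1]) (prim R) (prim R) ≤ 1 / 14 * ip (pe [1]) R R := by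
    have := hs (pe [1]) ip_pe_nonneg_one ![pe (leg 0), pe (leg 2)] ![1, 1/5]
      (fun i => by fin_cases i <;> simp)
      (fun i j => by fin_cases i <;> fin_cases j <;> simp [g00, g02, g20, g22])
      (fun x => 1 - x) kernel_one (Continuous.intervalIntegrable (by fun_prop) _ _) R
      (fun i => by fin_cases i <;> simp [hR0, hR2])
    rw [integral_one_sub] at this
    refine this.trans (le_of_eq ?_)
    congr 1
    simp [l00, l22]
    norm_num
  have hff : ip (pe [1]) f f = (z + r) ^ 2 + 5 * r ^ 2 + ip (pe [1]) R R := by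
    rw [hf]
    simp only [map_add, map_smul, LinearMap.add_apply, LinearMap.smul_apply, smul_eq_mul,
      g00, g02, g20, g22, hR0, hR2, ip_symm _ R (pe _)]
    push_cast; ring
  have hphi : prim f + (z + r) • pe (leg 0) = z • pe (leg 1) + r • pe (leg 3) + prim R := by
    have e : prim f = (z + r) • prim (pe (leg 0)) + (5 * r) • prim (pe (leg 2)) + prim R := by
      conv_lhs => rw [hf]
      simp only [map_add, map_smul]
    rw [e, prim_pe, prim_pe, pe_lin3 (pL (leg 0)) (leg 1) (leg 0) [] 1 (-1) 0 (by decide +kernel),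
      pe_lin3 (pL (leg 2)) (leg 1) (leg 3) [] (-1/5) (1/5) 0 (by decide +kernel)]
    ext x
    simp only [ContinuousMap.add_apply, ContinuousMap.smul_apply, smul_eq_mul, pe_nil]
    push_cast; ring
  have hpp : ip (pe [1]) (prim f + (z + r) • pe (leg 0)) (prim f + (z + r) • pe (leg 0))
      = z ^ 2 / 3 + r ^ 2 / 7 - 2 / 7 * r * π4 + ip (pe [1]) (prim R) (prim R) := by
    rw [hphi]
    simp only [map_add, map_smul, LinearMap.add_apply, LinearMap.smul_apply, smul_eq_mul,
      m11, m13, m33, c1, c3, ip_symm _ (prim R) (pe _), ip_symm _ (pe (leg 3)) (pe (leg 1))]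
    push_cast; ring
  rw [hff, hpp]
  have hRn := ip_nonneg ip_pe_nonneg_one R
  have hPn := ip_nonneg ip_pe_nonneg_one (prim R)
  generalize ip (pe [1]) R R = RR at *
  generalize ip (pe [1]) (prim R) (prim R) = PR at *
  exact odd_arith y kb c2 z r π4 RR PR hy1 hk hc hPn bessel tail

/-! ### The dissipation inequality for the odd part -/

theorem sq_pos (c : ℝ) (x : ℝ) (hc : 0 ≤ c := by norm_num) : 0 ≤ c * x ^ 2 :=
  mul_nonneg hc (sq_nonneg x)

/-- Polarization in `y` of the quadratic form `oddForm`. -/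
def oddPolar (ka kb c2 a0 a1 a2 b0 b1 d0 d1 d2 u v δ r z G : ℝ) : ℝ :=
  ka * δ ^ 2 + (6 * kb - (u + v) / 2 / 7 - c2 * (u * v)) * r ^ 2
  + (kb - (u + v) / 2 / 3) * z ^ 2 + 2 * kb * z * r
  + 2 * (a1 * ((u + v) / 2) + 2 * a2 * (u * v)) * z ^ 2
  + 2 * (a0 + a1 * ((u + v) / 2) + a2 * (u * v)) * z * (δ + z + 3 * r)
  + 4 * (b1 * ((u + v) / 2)) * z * G
  + 2 * (b0 + b1 * ((u + v) / 2)) * (G * (δ + z + 3 * r) + z * (z + r - G))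
  + 2 * (d1 * ((u + v) / 2) + 2 * d2 * (u * v)) * G ^ 2
  + 2 * (d0 + d1 * ((u + v) / 2) + d2 * (u * v)) * G * (z + r - G)

/-- The integrand of `odd_diss` divided by `s`, plus `s⁻¹ V'(s)`, at `s = √y`. The storage function is
`V = s² (α z² + 2 β z G + γ G²)` with `α = a0 + a1 y + a2 y²`, `β = b0 + b1 y` and
`γ = d0 + d1 y + d2 y²`; `δ` is the value of the forcing `A`, and `G` is the average
`s⁻² ∫₀ˢ x (z + r) dx`. -/
def oddForm (ka kb c2 a0 a1 a2 b0 b1 d0 d1 d2 y δ r z G : ℝ) : ℝ :=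
  oddPolar ka kb c2 a0 a1 a2 b0 b1 d0 d1 d2 y y δ r z G

/-- A quadratic polynomial with nonnegative Bernstein coefficients on `[u, v]`
is nonnegative there. -/
theorem oddForm_nonneg (ka kb c2 a0 a1 a2 b0 b1 d0 d1 d2 u v y : ℝ) (huv : u < v) (hu : u ≤ y)
    (hv : y ≤ v) (δ r z G : ℝ)
    (h1 : 0 ≤ oddPolar ka kb c2 a0 a1 a2 b0 b1 d0 d1 d2 u u δ r z G)
    (h2 : 0 ≤ oddPolar ka kb c2 a0 a1 a2 b0 b1 d0 d1 d2 u v δ r z G)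
    (h3 : 0 ≤ oddPolar ka kb c2 a0 a1 a2 b0 b1 d0 d1 d2 v v δ r z G) :
    0 ≤ oddForm ka kb c2 a0 a1 a2 b0 b1 d0 d1 d2 y δ r z G := by
  have e : (v - u) ^ 2 * oddForm ka kb c2 a0 a1 a2 b0 b1 d0 d1 d2 y δ r z G =
      (v - y) ^ 2 * oddPolar ka kb c2 a0 a1 a2 b0 b1 d0 d1 d2 u u δ r z G
      + 2 * ((v - y) * (y - u)) * oddPolar ka kb c2 a0 a1 a2 b0 b1 d0 d1 d2 u v δ r z G
      + (y - u) ^ 2 * oddPolar ka kb c2 a0 a1 a2 b0 b1 d0 d1 d2 v v δ r z G := by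
    unfold oddForm oddPolar; ring
  have p1 : 0 < (v - u) ^ 2 := by have := sub_pos.2 huv; positivity
  have p2 : 0 ≤ (v - y) * (y - u) := mul_nonneg (by linarith) (by linarith)
  refine nonneg_of_mul_nonneg_right (a := (v - u) ^ 2) ?_ p1
  rw [e]; positivity

/-- The pair of weights `(0.6, 4)`, times `89/2500`. The coefficients of the storage function are rational
approximations of a numerical optimum; each Bernstein coefficient is a sum of squares found by
elimination of `δ`, `r`, `z`, `G` in turn. -/
theorem odd_psd_a (y : ℝ) (h0 : 0 ≤ y) (h1 : y ≤ 1) (δ r z G : ℝ) :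
    0 ≤ oddForm (89 / 12500) (89 / 625) (799 / 25000) (-437 / 12500) (1877 / 100000) (809 / 50000) (219 / 3125) (397 / 25000) (-41343 / 100000) (23783 / 100000) (6499 / 25000) y δ r z G := by
  have h00 : 0 ≤ oddPolar (89 / 12500) (89 / 625) (799 / 25000) (-437 / 12500) (1877 / 100000) (809 / 50000) (219 / 3125) (397 / 25000) (-41343 / 100000) (23783 / 100000) (6499 / 25000) (0) (0) δ r z G := by
    unfold oddPolar
    linarith [sq_pos (89 / 12500) (δ + (-437 / 89) * z + (876 / 89) * G),
      sq_pos (534 / 625) (r + (269 / 2136) * z + (-6773 / 28480) * G),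
      sq_pos (732427 / 26700000) (z + (-9342933 / 5859416) * G),
      sq_pos (4958656672497 / 260744012000000) (G)]
  have h11 : 0 ≤ oddPolar (89 / 12500) (89 / 625) (799 / 25000) (-437 / 12500) (1877 / 100000) (809 / 50000) (219 / 3125) (397 / 25000) (-41343 / 100000) (23783 / 100000) (6499 / 25000) (1 / 2) (1 / 2) δ r z G := by
    unfold oddPolar
    linarith [sq_pos (89 / 12500) (δ + (-2153 / 712) * z + (3901 / 356) * G),
      sq_pos (542487 / 700000) (r + (109081 / 542487) * z + (6349 / 1084974) * G),
      sq_pos (350530720531 / 12875024800000) (z + (825261732382 / 1051592161593) * G),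
      sq_pos (107405479008680189 / 1261910593911600000) (G)]
  have h22 : 0 ≤ oddPolar (89 / 12500) (89 / 625) (799 / 25000) (-437 / 12500) (1877 / 100000) (809 / 50000) (219 / 3125) (397 / 25000) (-41343 / 100000) (23783 / 100000) (6499 / 25000) (1) (1) δ r z G := by
    unfold oddPolar
    linarith [sq_pos (89 / 12500) (δ + (-1 / 712) * z + (2149 / 178) * G),
      sq_pos (118927 / 175000) (r + (159831 / 475708) * z + (59892 / 118927) * G),
      sq_pos (165399677369 / 25402807200000) (z + (31830880644 / 165399677369) * G),
      sq_pos (1127924640756013 / 8269983868450000) (G)]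
  have h01 : 0 ≤ oddPolar (89 / 12500) (89 / 625) (799 / 25000) (-437 / 12500) (1877 / 100000) (809 / 50000) (219 / 3125) (397 / 25000) (-41343 / 100000) (23783 / 100000) (6499 / 25000) (0) (1 / 2) δ r z G := by
    unfold oddPolar
    linarith [sq_pos (89 / 12500) (δ + (-12107 / 2848) * z + (7405 / 712) * G),
      sq_pos (14327 / 17500) (r + (351813 / 2292320) * z + (-369103 / 2292320) * G),
      sq_pos (987138211933 / 122409888000000) (z + (-2695609296261 / 1974276423866) * G),
      sq_pos (103408010783745057 / 5054147645096960000) (G)]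
  have h12 : 0 ≤ oddPolar (89 / 12500) (89 / 625) (799 / 25000) (-437 / 12500) (1877 / 100000) (809 / 50000) (219 / 3125) (397 / 25000) (-41343 / 100000) (23783 / 100000) (6499 / 25000) (1 / 2) (1) δ r z G := by
    unfold oddPolar
    linarith [sq_pos (89 / 12500) (δ + (-5117 / 2848) * z + (8199 / 712) * G),
      sq_pos (255947 / 350000) (r + (520835 / 2047576) * z + (394499 / 2047576) * G),
      sq_pos (6126089154561 / 291574822400000) (z + (8810089831016 / 6126089154561) * G),
      sq_pos (1412809433800671551 / 19603485294595200000) (G)]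
  rcases le_total y (1 / 2) with k1 | k1
  · exact oddForm_nonneg _ _ _ _ _ _ _ _ _ _ _ (0) (1 / 2) y (by norm_num) (by linarith) k1 δ r z G h00 h01 h11
  exact oddForm_nonneg _ _ _ _ _ _ _ _ _ _ _ (1 / 2) (1) y (by norm_num) (by linarith) h1 δ r z G h11 h12 h22

/-- The pair of weights `(1.2, 2.74)`, times `89/2500`, with certificates as in `odd_psd_a`. -/
theorem odd_psd_b (y : ℝ) (h0 : 0 ≤ y) (h1 : y ≤ 1) (δ r z G : ℝ) :
    0 ≤ oddForm (89 / 6250) (12193 / 125000) (8683 / 100000) (-111 / 2500) (967 / 100000) (217 / 6250) (9467 / 100000) (-73 / 25000) (-2153 / 6250) (16797 / 100000) (26271 / 50000) y δ r z G := by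
  have h00 : 0 ≤ oddPolar (89 / 6250) (12193 / 125000) (8683 / 100000) (-111 / 2500) (967 / 100000) (217 / 6250) (9467 / 100000) (-73 / 25000) (-2153 / 6250) (16797 / 100000) (26271 / 50000) (0) (0) δ r z G := by
    unfold oddPolar
    linarith [sq_pos (89 / 6250) (δ + (-555 / 178) * z + (9467 / 1424) * G),
      sq_pos (36579 / 62500) (r + (29507 / 292632) * z + (-30235 / 292632) * G),
      sq_pos (1571294299 / 29263200000) (z + (-1264278167 / 1571294299) * G),
      sq_pos (4154508526523277 / 223752308177600000) (G)]
  have h11 : 0 ≤ oddPolar (89 / 6250) (12193 / 125000) (8683 / 100000) (-111 / 2500) (967 / 100000) (217 / 6250) (9467 / 100000) (-73 / 25000) (-2153 / 6250) (16797 / 100000) (26271 / 50000) (1 / 4) (1 / 4) δ r z G := by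
    unfold oddPolar
    linarith [sq_pos (89 / 6250) (δ + (-15925 / 5696) * z + (4697 / 712) * G),
      sq_pos (30470879 / 56000000) (r + (4034604 / 30470879) * z + (681590 / 30470879) * G),
      sq_pos (3151703746122059 / 208274552140800000) (z + (-2099583134784024 / 3151703746122059) * G),
      sq_pos (80643220327119162919 / 630340749224411800000) (G)]
  have h22 : 0 ≤ oddPolar (89 / 6250) (12193 / 125000) (8683 / 100000) (-111 / 2500) (967 / 100000) (217 / 6250) (9467 / 100000) (-73 / 25000) (-2153 / 6250) (16797 / 100000) (26271 / 50000) (1 / 2) (1 / 2) δ r z G := by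
    unfold oddPolar
    linarith [sq_pos (89 / 6250) (δ + (-6177 / 2848) * z + (9321 / 1424) * G),
      sq_pos (6889791 / 14000000) (r + (1373386 / 6889791) * z + (2106860 / 6889791) * G),
      sq_pos (52494882869569 / 3924424953600000) (z + (157385714829934 / 52494882869569) * G),
      sq_pos (2760618659947171013 / 15748464860870700000) (G)]
  have h33 : 0 ≤ oddPolar (89 / 6250) (12193 / 125000) (8683 / 100000) (-111 / 2500) (967 / 100000) (217 / 6250) (9467 / 100000) (-73 / 25000) (-2153 / 6250) (16797 / 100000) (26271 / 50000) (3 / 4) (3 / 4) δ r z G := by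
    unfold oddPolar
    linarith [sq_pos (89 / 6250) (δ + (-7047 / 5696) * z + (578 / 89) * G),
      sq_pos (24039639 / 56000000) (r + (7681604 / 24039639) * z + (19851230 / 24039639) * G),
      sq_pos (1329109324121561 / 54771913497600000) (z + (4042650139766624 / 1329109324121561) * G),
      sq_pos (8625071716317665281 / 53164372964862440000) (G)]
  have h44 : 0 ≤ oddPolar (89 / 6250) (12193 / 125000) (8683 / 100000) (-111 / 2500) (967 / 100000) (217 / 6250) (9467 / 100000) (-73 / 25000) (-2153 / 6250) (16797 / 100000) (26271 / 50000) (1) (1) δ r z G := by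
    unfold oddPolar
    linarith [sq_pos (89 / 6250) (δ + (-1 / 1424) * z + (9175 / 1424) * G),
      sq_pos (1244519 / 3500000) (r + (662424 / 1244519) * z + (2184560 / 1244519) * G),
      sq_pos (2748951811883 / 531658516800000) (z + (5800844271603 / 2748951811883) * G),
      sq_pos (2061975060925283 / 68723795297075000) (G)]
  have h01 : 0 ≤ oddPolar (89 / 6250) (12193 / 125000) (8683 / 100000) (-111 / 2500) (967 / 100000) (217 / 6250) (9467 / 100000) (-73 / 25000) (-2153 / 6250) (16797 / 100000) (26271 / 50000) (0) (1 / 4) δ r z G := by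
    unfold oddPolar
    linarith [sq_pos (89 / 6250) (δ + (-34553 / 11392) * z + (18861 / 2848) * G),
      sq_pos (496481 / 875000) (r + (1743707 / 15887392) * z + (-1135925 / 15887392) * G),
      sq_pos (61584112604213 / 2714837544960000) (z + (-91558680435624 / 61584112604213) * G),
      sq_pos (717666356861553813 / 63062131306714112000) (G)]
  have h12 : 0 ≤ oddPolar (89 / 6250) (12193 / 125000) (8683 / 100000) (-111 / 2500) (967 / 100000) (217 / 6250) (9467 / 100000) (-73 / 25000) (-2153 / 6250) (16797 / 100000) (26271 / 50000) (1 / 4) (1 / 2) δ r z G := by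
    unfold oddPolar
    linarith [sq_pos (89 / 6250) (δ + (-29147 / 11392) * z + (18715 / 2848) * G),
      sq_pos (14583487 / 28000000) (r + (2290897 / 14583487) * z + (1817515 / 14583487) * G),
      sq_pos (713558504294681 / 132908067123200000) (z + (1490663268037532 / 713558504294681) * G),
      sq_pos (99263156346772781751 / 570846803435744800000) (G)]
  have h23 : 0 ≤ oddPolar (89 / 6250) (12193 / 125000) (8683 / 100000) (-111 / 2500) (967 / 100000) (217 / 6250) (9467 / 100000) (-73 / 25000) (-2153 / 6250) (16797 / 100000) (26271 / 50000) (1 / 2) (3 / 4) δ r z G := by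
    unfold oddPolar
    linarith [sq_pos (89 / 6250) (δ + (-20269 / 11392) * z + (18569 / 2848) * G),
      sq_pos (12975677 / 28000000) (r + (3202647 / 12975677) * z + (6609925 / 12975677) * G),
      sq_pos (5351769132574193 / 354765389721600000) (z + (21573333574400268 / 5351769132574193) * G),
      sq_pos (480756260497574552469 / 4281415306059354400000) (G)]
  have h34 : 0 ≤ oddPolar (89 / 6250) (12193 / 125000) (8683 / 100000) (-111 / 2500) (967 / 100000) (217 / 6250) (9467 / 100000) (-73 / 25000) (-2153 / 6250) (16797 / 100000) (26271 / 50000) (3 / 4) (1) δ r z G := by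
    unfold oddPolar
    linarith [sq_pos (89 / 6250) (δ + (-7919 / 11392) * z + (207 / 32) * G),
      sq_pos (790283 / 2000000) (r + (639851 / 1580566) * z + (1891615 / 1580566) * G),
      sq_pos (426836851930111 / 21606969446400000) (z + (1383678268270500 / 426836851930111) * G),
      sq_pos (14704761975243261699 / 136587792617635520000) (G)]
  rcases le_total y (1 / 4) with k1 | k1
  · exact oddForm_nonneg _ _ _ _ _ _ _ _ _ _ _ (0) (1 / 4) y (by norm_num) (by linarith) k1 δ r z G h00 h01 h11
  rcases le_total y (1 / 2) with k2 | k2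
  · exact oddForm_nonneg _ _ _ _ _ _ _ _ _ _ _ (1 / 4) (1 / 2) y (by norm_num) (by linarith) k2 δ r z G h11 h12 h22
  rcases le_total y (3 / 4) with k3 | k3
  · exact oddForm_nonneg _ _ _ _ _ _ _ _ _ _ _ (1 / 2) (3 / 4) y (by norm_num) (by linarith) k3 δ r z G h22 h23 h33
  exact oddForm_nonneg _ _ _ _ _ _ _ _ _ _ _ (3 / 4) (1) y (by norm_num) (by linarith) h1 δ r z G h33 h34 h44
/-- The dissipation argument for the odd part: `oddForm` is the slice form plus the derivative of
`V`, and `V` vanishes at `0` and is nonpositive at `1`. -/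
theorem odd_diss (ka kb c2 a0 a1 a2 b0 b1 d0 d1 d2 : ℝ)
    (hpsd : ∀ y : ℝ, 0 ≤ y → y ≤ 1 → ∀ δ r z G : ℝ,
      0 ≤ oddForm ka kb c2 a0 a1 a2 b0 b1 d0 d1 d2 y δ r z G)
    (ha : a0 + a1 + a2 ≤ 0) (A z r : C(ℝ, ℝ))
    (hz : ∀ s ∈ Set.Icc (0:ℝ) 1, s * z s = ∫ x in (0:ℝ)..s, (A x + z x + 3 * r x))
    (h0 : ∫ x in (0:ℝ)..1, x * (z x + r x) = 0) :
    0 ≤ ∫ s in (0:ℝ)..1, s * (ka * A s ^ 2 + kb * (z s ^ 2 + 2 * z s * r s + 6 * r s ^ 2)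
      - s ^ 2 * (z s ^ 2 / 3) - r s ^ 2 * (s ^ 2 / 7 + c2 * (s ^ 2) ^ 2)) := by
  set Z : ℝ → ℝ := fun s => ∫ x in (0:ℝ)..s, (A x + z x + 3 * r x) with hZ
  have hZd : ∀ s, HasDerivAt Z (A s + z s + 3 * r s) s := fun s =>
    intervalIntegral.integral_hasDerivAt_right
      (Continuous.intervalIntegrable (by fun_prop) _ _)
      (Continuous.stronglyMeasurableAtFilter (by fun_prop) _ _) (by fun_prop)
  have hZc : Continuous Z := continuous_iff_continuousAt.2 fun s => (hZd s).continuousAt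
  set G : C(ℝ, ℝ) := avg (z + r) with hG
  have hG1 : G 1 = 0 := by
    have := avg_eq (z + r) 1
    simp only [ContinuousMap.add_apply] at this
    rw [h0] at this; simpa using this
  -- `s G(s) = s⁻¹ ∫₀ˢ x (z + r)` is the second state variable of the dissipation argument
  have hHd : ∀ s ∈ Set.Ioo (0:ℝ) 1, HasDerivAt (fun s => s * G s) (z s + r s - G s) s := by
    intro s hs
    have h1 := (avg_hasDerivAt (z + r) s).div (hasDerivAt_id s) hs.1.ne'
    have h2 := h1.congr_of_eventuallyEq (f₁ := fun s => s * G s) (by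
      filter_upwards [isOpen_Ioi.mem_nhds hs.1] with t ht
      have : t ≠ 0 := ne_of_gt ht
      simp only [Pi.div_apply, id, hG]; field_simp)
    refine h2.congr_deriv ?_
    have : s ≠ 0 := hs.1.ne'
    simp only [id, ContinuousMap.add_apply, hG]; field_simp
  set V : ℝ → ℝ := fun s => (a0 + a1 * s ^ 2 + a2 * s ^ 4) * Z s ^ 2
    + 2 * ((b0 + b1 * s ^ 2) * (Z s * (s * G s)))
    + (d0 + d1 * s ^ 2 + d2 * s ^ 4) * (s * G s) ^ 2 with hV
  set V' : ℝ → ℝ := fun s => (2 * a1 * s + 4 * a2 * s ^ 3) * Z s ^ 2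
      + (a0 + a1 * s ^ 2 + a2 * s ^ 4) * (2 * Z s * (A s + z s + 3 * r s))
    + 2 * ((2 * b1 * s) * (Z s * (s * G s))
      + (b0 + b1 * s ^ 2) * ((A s + z s + 3 * r s) * (s * G s) + Z s * (z s + r s - G s)))
    + ((2 * d1 * s + 4 * d2 * s ^ 3) * (s * G s) ^ 2
      + (d0 + d1 * s ^ 2 + d2 * s ^ 4) * (2 * (s * G s) * (z s + r s - G s))) with hV'
  have hVc : Continuous V := by fun_prop
  have hVc' : Continuous V' := by fun_prop
  have hpoly : ∀ a b c s : ℝ, HasDerivAt (fun s : ℝ => a + b * s ^ 2 + c * s ^ 4)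
      (2 * b * s + 4 * c * s ^ 3) s := by
    intro a b c s
    have := (((hasDerivAt_id s).pow 2).const_mul b |>.const_add a).add
      (((hasDerivAt_id s).pow 4).const_mul c)
    refine this.congr_deriv ?_
    simp only [id]; push_cast; ring
  have hVd : ∀ s ∈ Set.Ioo (0:ℝ) 1, HasDerivAt V (V' s) s := by
    intro s hs
    have t1 := (hpoly a0 a1 a2 s).mul ((hZd s).pow 2)
    have t2 := ((hpoly b0 b1 0 s).mul ((hZd s).mul (hHd s hs))).const_mul 2
    have t3 := (hpoly d0 d1 d2 s).mul ((hHd s hs).pow 2)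
    have := (t1.add t2).add t3
    refine HasDerivAt.congr_deriv (this.congr_of_eventuallyEq
      (Filter.Eventually.of_forall fun t => ?_)) ?_
    · simp only [hV, Pi.add_apply, Pi.mul_apply, Pi.pow_apply]; ring
    · simp only [hV', Pi.add_apply, Pi.mul_apply, Pi.pow_apply]; push_cast; ring
  have hint := intervalIntegral.integral_eq_sub_of_hasDerivAt_of_le zero_le_one
    hVc.continuousOn hVd (hVc'.intervalIntegrable _ _)
  have hZ0 : Z 0 = 0 := by simp [hZ]
  have hV0 : V 0 = 0 := by simp [hV, hZ0]
  have hV1 : V 1 ≤ 0 := by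
    simp only [hV, hG1]
    have := mul_nonneg (neg_nonneg.2 ha) (sq_nonneg (Z 1))
    simp; linarith
  have key : 0 ≤ ∫ s in (0:ℝ)..1, (s * (ka * A s ^ 2
      + kb * (z s ^ 2 + 2 * z s * r s + 6 * r s ^ 2)
      - s ^ 2 * (z s ^ 2 / 3) - r s ^ 2 * (s ^ 2 / 7 + c2 * (s ^ 2) ^ 2)) + V' s) := by
    apply intervalIntegral.integral_nonneg zero_le_one
    intro s hs
    have hp := mul_nonneg hs.1 (hpsd (s ^ 2) (by positivity) (by nlinarith [hs.1, hs.2])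
      (A s) (r s) (z s) (G s))
    refine hp.trans (le_of_eq ?_)
    simp only [hV', ← hz s hs, oddForm, oddPolar, hZ]
    ring
  rw [intervalIntegral.integral_add (Continuous.intervalIntegrable (by fun_prop) _ _)
    (hVc'.intervalIntegrable _ _), hint, hV0] at key
  linarith

/-! ### Even and odd Crouzeix–Raviart fields on the half strip -/

/-- The slice `t ↦ q (s, t)`. -/
def sl (q : C(ℝ × ℝ, ℝ)) (s : ℝ) : C(ℝ, ℝ) := ⟨fun t => q (s, t), by fun_prop⟩

theorem sl_apply (q : C(ℝ × ℝ, ℝ)) (s t : ℝ) : sl q s t = q (s, t) := rfl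

/-- The slicewise product integral `s ↦ ∫₀¹ f(s,t) g(s,t) dt`. -/
def mm (f g : C(ℝ × ℝ, ℝ)) : C(ℝ, ℝ) :=
  ⟨fun s => ip (pe [1]) (sl f s) (sl g s), by
    simp only [ip_apply, sl_apply]
    exact intervalIntegral.continuous_parametric_intervalIntegral_of_continuous' (by fun_prop) _ _⟩

theorem mm_apply (f g : C(ℝ × ℝ, ℝ)) (s : ℝ) : mm f g s = ip (pe [1]) (sl f s) (sl g s) := rfl

/-- The slicewise moment `s ↦ ∫₀¹ l(t) q(s,t) dt` against the polynomial with coefficients `l`. -/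
def mom (l : List ℚ) (q : C(ℝ × ℝ, ℝ)) : C(ℝ, ℝ) :=
  ⟨fun s => ip (pe [1]) (pe l) (sl q s), by
    simp only [ip_apply, sl_apply]
    exact intervalIntegral.continuous_parametric_intervalIntegral_of_continuous' (by fun_prop) _ _⟩

theorem mom_apply (l : List ℚ) (q : C(ℝ × ℝ, ℝ)) (s : ℝ) :
    mom l q s = ip (pe [1]) (pe l) (sl q s) := rfl

/-- In the coordinates `P(s,t) = V + s m + s t d`, `w` is a `C¹` function with `∂_m w = p` and
`∂_d w = q`, so that `∂_s w = p + t q` and `∂_t w = s q`; both are recorded in integrated form. -/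
structure Fld (w p q : C(ℝ × ℝ, ℝ)) : Prop where
  f1 : ∀ a ∈ Set.Icc (0:ℝ) 1, ∀ b ∈ Set.Icc (0:ℝ) 1, ∀ t ∈ Set.Icc (-1:ℝ) 1,
    w (b, t) - w (a, t) = ∫ x in a..b, (p (x, t) + t * q (x, t))
  f2 : ∀ s ∈ Set.Icc (0:ℝ) 1, ∀ t ∈ Set.Icc (-1:ℝ) 1, ∀ t' ∈ Set.Icc (-1:ℝ) 1,
    w (s, t') - w (s, t) = s * ∫ x in t..t', q (s, x)

theorem pe_one (t : ℝ) : pe [1] t = 1 := by simp [pe_cons, pe_nil]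

/-- Integrating `∂_s w = p + t q` against a polynomial in `t`. -/
theorem Fld.mom_sub {w p q : C(ℝ × ℝ, ℝ)} (h : Fld w p q) (l : List ℚ) {a b : ℝ}
    (ha : a ∈ Set.Icc (0:ℝ) 1) (hb : b ∈ Set.Icc (0:ℝ) 1) :
    mom l w b - mom l w a = ∫ x in a..b, (mom l p x + mom (0 :: l) q x) := by
  have e1 : mom l w b - mom l w a
      = ∫ t in (0:ℝ)..1, ∫ x in a..b, pe l t * (p (x, t) + t * q (x, t)) := by
    rw [mom_apply, mom_apply, ip_apply, ip_apply, ← intervalIntegral.integral_sub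
      (Continuous.intervalIntegrable (by fun_prop) _ _)
      (Continuous.intervalIntegrable (by fun_prop) _ _)]
    apply intervalIntegral.integral_congr
    intro t ht
    rw [Set.uIcc_of_le zero_le_one] at ht
    simp only [sl_apply, pe_one, intervalIntegral.integral_const_mul]
    rw [← h.f1 a ha b hb t ⟨by linarith [ht.1], ht.2⟩]; ring
  rw [e1, intervalIntegral_intervalIntegral_swap]
  · congr 1; ext x
    rw [mom_apply, mom_apply, ip_apply, ip_apply, ← intervalIntegral.integral_add
      (Continuous.intervalIntegrable (by fun_prop) _ _)
      (Continuous.intervalIntegrable (by fun_prop) _ _)]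
    congr 1; ext t
    simp only [sl_apply, pe_cons, pe_nil]; push_cast; ring
  · refine IntegrableOn.mono_set (ContinuousOn.integrableOn_compact
      (isCompact_uIcc.prod isCompact_uIcc) (Continuous.continuousOn ?_))
      (Set.prod_mono Set.uIoc_subset_uIcc Set.uIoc_subset_uIcc)
    unfold Function.uncurry
    fun_prop

theorem Fld.slice {w p q : C(ℝ × ℝ, ℝ)} (h : Fld w p q) {s t : ℝ}
    (hs : s ∈ Set.Icc (0:ℝ) 1) (ht : t ∈ Set.Icc (0:ℝ) 1) :
    w (s, t) = w (s, 1) + s * prim (sl q s) t := by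
  have := h.f2 s hs 1 (by norm_num) t ⟨by linarith [ht.1], ht.2⟩
  rw [prim_apply]; simp only [sl_apply]; linarith

theorem ip_congr {ω f f' g g' : C(ℝ, ℝ)} (hf : ∀ x ∈ Set.Icc (0:ℝ) 1, f x = f' x)
    (hg : ∀ x ∈ Set.Icc (0:ℝ) 1, g x = g' x) : ip ω f g = ip ω f' g' := by
  rw [ip_apply, ip_apply]
  apply intervalIntegral.integral_congr
  intro x hx
  rw [Set.uIcc_of_le zero_le_one] at hx
  simp only [hf x hx, hg x hx]

theorem Fld.slice_ip {w p q : C(ℝ × ℝ, ℝ)} (h : Fld w p q) {s : ℝ}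
    (hs : s ∈ Set.Icc (0:ℝ) 1) (g : C(ℝ, ℝ)) :
    ip (pe [1]) g (sl w s) = ip (pe [1]) g (w (s, 1) • pe [1] + s • prim (sl q s)) :=
  ip_congr (fun _ _ => rfl) fun t ht => by
    rw [sl_apply, h.slice hs ht]; simp [pe_one]

/-- With `A(s)` the `t`-mean of `p` and `τ(s) = ∫₀¹ t q(s,t) dt`, the mean of `w` over a slice is
`prim (A + τ)` because it vanishes at `s = 1`, and the vanishing mean of `w` on the side `t = 1` says
that `A` is orthogonal to the constants. The slice inequality `even_slice` then reduces the claim to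
`even_oneD`. -/
theorem even2D {w p q : C(ℝ × ℝ, ℝ)} (h : Fld w p q) (h1 : mom [1] w 1 = 0)
    (hT : ∫ s in (0:ℝ)..1, w (s, 1) = 0) (ka kb : ℝ) (hka : 0 ≤ ka) (hkb : 0.1424 ≤ 89/2500*kb)
    (h2 : 0 < 3*(89/2500)*kb - 0.345)
    (h3 : 1 ≤ (ka-1)*((3*(89/2500)*kb-0.345)*16.2)) :
    0 ≤ ∫ s in (0:ℝ)..1, s * (89/2500*ka * mm p p s + 89/2500*kb * mm q q s - mm w w s) := by
  obtain ⟨A, hA⟩ : ∃ A, A = mom [1] p := ⟨_, rfl⟩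
  obtain ⟨τ, hτ⟩ : ∃ τ, τ = mom [0, 1] q := ⟨_, rfl⟩
  have hW : ∀ s ∈ Set.Icc (0:ℝ) 1, mom [1] w s = prim (A + τ) s := by
    intro s hs
    have := h.mom_sub [1] (a := 1) (by norm_num) hs
    rw [h1, sub_zero] at this
    rw [this, hA, hτ]; rfl
  have i11 : ip (pe [1]) (pe [1]) (pe [1]) = 1 := by
    rw [ip_pe_val [1] [1] [1] 1]; norm_num
  have hpr : ∀ g, ip (pe [1]) (pe [1]) (prim g) = - ip (pe [1]) (pe [0, 1]) g := by
    intro g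
    rw [ip_pe_prim, show (0 :: pprimAux 0 [1] : List ℚ) = [0, 1] by decide +kernel]
  have hT' : ∀ s ∈ Set.Icc (0:ℝ) 1, w (s, 1) = mom [1] w s + s * τ s := by
    intro s hs
    rw [mom_apply, h.slice_ip hs, map_add, map_smul, map_smul, i11, hpr, hτ, mom_apply]
    simp
  have hA0 : ip (pe [0, 1]) (pe (jac 0)) A = 0 := by
    have hj : jac 0 = [1] := rfl
    have e : ∀ g : C(ℝ, ℝ), ip (pe [0, 1]) (pe [1]) g = ip (pe [1]) (pe [0, 1]) g := by
      intro g; rw [ip_apply, ip_apply]; congr 1; ext x; ring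
    have e2 : ip (pe [1]) (pe [1]) (prim (A + τ) + pe [0, 1] * τ) = 0 := by
      rw [ip_apply]
      refine Eq.trans ?_ hT
      apply intervalIntegral.integral_congr
      intro s hs
      rw [Set.uIcc_of_le zero_le_one] at hs
      simp only [hT' s hs, hW s hs, pe_one]
      simp [pe_cons, pe_nil]
    have e3 : ip (pe [1]) (pe [1]) (pe [0, 1] * τ) = ip (pe [1]) (pe [0, 1]) τ := by
      rw [ip_apply, ip_apply]; congr 1; ext x; simp only [pe_one, ContinuousMap.mul_apply]; ring
    rw [map_add, hpr, map_add, e3] at e2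
    rw [hj, e]; linarith
  have key := even_oneD A τ hA0 ka kb h2 h3
  have low : ∫ s in (0:ℝ)..1, s * (89/2500*ka * A s ^ 2 + (3*(89/2500*kb) - 0.2 * s^2 - 0.06 * (s^2)^2)
      * τ s ^ 2 - prim (A + τ) s ^ 2)
      ≤ ∫ s in (0:ℝ)..1, s * (89/2500*ka * mm p p s + 89/2500*kb * mm q q s - mm w w s) := by
    apply intervalIntegral.integral_mono_on zero_le_one
      (Continuous.intervalIntegrable (by fun_prop) _ _)
      (Continuous.intervalIntegrable (by fun_prop) _ _)
    intro s hs
    apply mul_le_mul_of_nonneg_left _ hs.1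
    have c1 := ip_cs ip_pe_nonneg_one (pe [1]) (sl p s)
    rw [i11, ← mom_apply, ← hA, ← mm_apply, one_mul] at c1
    have c2 := even_slice (sl q s) (s^2) (89/2500*kb) (by positivity)
      (by nlinarith [hs.1, hs.2]) hkb
    rw [← mom_apply [0, 1], ← hτ, ← mm_apply q q] at c2
    have c3 : mm w w s = mom [1] w s ^ 2
        + s^2 * (ip (pe [1]) (prim (sl q s)) (prim (sl q s)) - τ s ^ 2) := by
      rw [mm_apply, h.slice_ip hs, ip_symm, h.slice_ip hs]
      simp only [map_add, map_smul, LinearMap.add_apply, LinearMap.smul_apply, i11, hpr, smul_eq_mul]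
      rw [ip_symm _ (prim _) (pe [1]), hpr, ← mom_apply [0, 1], ← hτ, hT' s hs]
      ring
    rw [c3, hW s hs]
    have := mul_le_mul_of_nonneg_left c1 (show 0 ≤ 89/2500*ka by positivity)
    linarith
  refine le_trans ?_ low
  have e : ∫ s in (0:ℝ)..1, s * (89/2500*ka * A s ^ 2 + (3*(89/2500*kb) - 0.2 * s^2 - 0.06 * (s^2)^2)
      * τ s ^ 2 - prim (A + τ) s ^ 2) = 89/2500*ka*ip (pe [0,1]) A A + 3*(89/2500)*kb*ip (pe [0,1]) τ τ
      - ip (pe [0,1]) (prim (A+τ)) (prim (A+τ)) - ip (pe [0,1]) (pe [0,0,1/5,0,3/50] * τ) τ := by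
    simp only [ip_apply]
    rw [← intervalIntegral.integral_const_mul, ← intervalIntegral.integral_const_mul,
      ← intervalIntegral.integral_add
      (Continuous.intervalIntegrable (by fun_prop) _ _)
      (Continuous.intervalIntegrable (by fun_prop) _ _),
      ← intervalIntegral.integral_sub
      (Continuous.intervalIntegrable (by fun_prop) _ _)
      (Continuous.intervalIntegrable (by fun_prop) _ _),
      ← intervalIntegral.integral_sub
      (Continuous.intervalIntegrable (by fun_prop) _ _)
      (Continuous.intervalIntegrable (by fun_prop) _ _)]
    congr 1; ext s
    simp only [pe_cons, pe_nil, ContinuousMap.mul_apply]; push_cast; ring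
  rw [e]; linarith

/-- The moments `z`, `r` of `q` and `A` of `p` satisfy the linear system required by `odd_diss`: `s z(s)`
is three times the first moment of the slice of `w`, and `w(s,1) = s (z + r)` has vanishing mean. The
slice inequality `odd_slice` then reduces the claim to `odd_diss`. -/
theorem odd2D {w p q : C(ℝ × ℝ, ℝ)} (h : Fld w p q) (h0 : ∀ s ∈ Set.Icc (0:ℝ) 1, w (s, 0) = 0)
    (hT : ∫ s in (0:ℝ)..1, w (s, 1) = 0) (ka kb c2 a0 a1 a2 b0 b1 d0 d1 d2 : ℝ)
    (hka : 0 ≤ ka) (hkb : 1 / 14 < kb) (hc : 1/441 ≤ (kb-1/14)*c2)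
    (hpsd : ∀ y, 0 ≤ y → y ≤ 1 → ∀ δ r z G, 0 ≤ oddForm ka kb c2 a0 a1 a2 b0 b1 d0 d1 d2 y δ r z G)
    (ha : a0 + a1 + a2 ≤ 0) :
    0 ≤ ∫ s in (0:ℝ)..1, s * (3 * ka * mm p p s + kb * mm q q s - mm w w s) := by
  obtain ⟨A, hA⟩ : ∃ A, A = (3:ℝ) • mom [0, 1] p := ⟨_, rfl⟩
  obtain ⟨z, hz⟩ : ∃ z, z = mom [3/2, 0, -3/2] q := ⟨_, rfl⟩
  obtain ⟨r, hr⟩ : ∃ r, r = mom [-1/2, 0, 3/2] q := ⟨_, rfl⟩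
  have i01 : ip (pe [1]) (pe [0, 1]) (pe [1]) = 1/2 := by
    rw [ip_pe_val [1] [0, 1] [1] (1/2)]; norm_num
  have i11 : ip (pe [1]) (pe [0, 1]) (pe [0, 1]) = 1/3 := by
    rw [ip_pe_val [1] [0, 1] [0, 1] (1/3)]; norm_num
  have hq1 : ∀ s, mom [1] q s = z s + r s := by
    intro s
    rw [hz, hr, mom_apply, mom_apply, mom_apply, ← LinearMap.add_apply, ← map_add]
    congr 2; ext x; simp only [ContinuousMap.add_apply, pe_cons, pe_nil]; push_cast; ring
  have hT' : ∀ s ∈ Set.Icc (0:ℝ) 1, w (s, 1) = s * (z s + r s) := by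
    intro s hs
    have := h.f2 s hs 0 (by norm_num) 1 (by norm_num)
    rw [h0 s hs, sub_zero] at this
    rw [this, ← hq1, mom_apply, ip_apply]
    congr 2; ext x; simp [pe_one, sl_apply]
  have hm : ∀ s ∈ Set.Icc (0:ℝ) 1, 3 * mom [0, 1] w s = s * z s := by
    intro s hs
    rw [mom_apply, h.slice_ip hs, map_add, map_smul, map_smul, i01, hT' s hs, ← hq1, hz, ip_pe_prim,
      show (0 :: pprimAux 0 [0, 1] : List ℚ) = [0, 0, 1/2] by decide +kernel, mom_apply, mom_apply]
    have : pe [3/2, 0, -3/2] = (3/2 : ℝ) • pe [1] - (3:ℝ) • pe [0, 0, 1/2] := by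
      ext x; simp [pe_cons, pe_nil]; ring
    rw [this, map_sub, map_smul, map_smul]
    simp only [LinearMap.sub_apply, LinearMap.smul_apply, smul_eq_mul]
    ring
  have hzz : ∀ s ∈ Set.Icc (0:ℝ) 1, s * z s = ∫ x in 0..s, (A x + z x + 3 * r x) := by
    intro s hs
    have e := h.mom_sub [0, 1] (a := 0) (by norm_num) hs
    have e0 := hm 0 (by norm_num)
    rw [zero_mul] at e0
    rw [← hm s hs, ← sub_zero (mom [0, 1] w s),
      show (0:ℝ) = mom [0, 1] w 0 by linarith, e, ← intervalIntegral.integral_const_mul]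
    rw [show mom [0, 1] w 0 = 0 by linarith]
    congr 1; ext x
    have : 3 * mom [0, 0, 1] q x = z x + 3 * r x := by
      have e : (3:ℝ) • pe [0, 0, 1] = pe [3/2, 0, -3/2] + (3:ℝ) • pe [-1/2, 0, 3/2] := by
        ext x; simp [pe_cons, pe_nil]; ring
      have e' := congrArg (fun f => ip (pe [1]) f (sl q x)) e
      simp only [map_add, map_smul, LinearMap.add_apply, LinearMap.smul_apply, smul_eq_mul] at e'
      rw [hz, hr]; exact e'
    rw [mul_add, this, hA, ContinuousMap.smul_apply, smul_eq_mul]; ring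
  have hT0 : ∫ x in (0:ℝ)..1, x * (z x + r x) = 0 := by
    refine Eq.trans ?_ hT
    apply intervalIntegral.integral_congr
    intro s hs
    rw [Set.uIcc_of_le zero_le_one] at hs
    exact (hT' s hs).symm
  have key := odd_diss ka kb c2 a0 a1 a2 b0 b1 d0 d1 d2 hpsd ha A z r hzz hT0
  refine key.trans ?_
  apply intervalIntegral.integral_mono_on zero_le_one
    (Continuous.intervalIntegrable (by fun_prop) _ _)
    (Continuous.intervalIntegrable (by fun_prop) _ _)
  intro s hs
  apply mul_le_mul_of_nonneg_left _ hs.1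
  have d1 := ip_cs ip_pe_nonneg_one (pe [0, 1]) (sl p s)
  rw [i11, ← mom_apply, ← mm_apply] at d1
  have hAs : A s = 3 * mom [0, 1] p s := by rw [hA]; rfl
  have d2 := odd_slice (sl q s) (s^2) kb c2 (z s) (r s) (by nlinarith [hs.1, hs.2]) hkb hc
    (by rw [hr]; rfl) (by rw [hz]; rfl)
  have d3 : mm w w s = s^2 * ip (pe [1]) (prim (sl q s) + (z s + r s) • pe [1])
      (prim (sl q s) + (z s + r s) • pe [1]) := by
    have e : w (s, 1) • pe [1] + s • prim (sl q s)
        = s • (prim (sl q s) + (z s + r s) • pe [1]) := by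
      rw [hT' s hs, smul_add, smul_smul, add_comm]
    rw [mm_apply, h.slice_ip hs, ip_symm, h.slice_ip hs, e]
    simp only [map_smul, LinearMap.smul_apply, smul_eq_mul]; ring
  rw [d3, hAs]
  rw [← mm_apply q q] at d2
  have := mul_le_mul_of_nonneg_left d1 (show 0 ≤ 9 * ka by positivity)
  linarith

/-! ### Crouzeix–Raviart and Fujino–Morley estimates on the strip -/

section

/-- The part of `f` that is even in `t`. -/
def ev (f : C(ℝ × ℝ, ℝ)) : C(ℝ × ℝ, ℝ) := ⟨fun z => (f z + f (z.1, -z.2)) / 2, by fun_prop⟩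

/-- The part of `f` that is odd in `t`. -/
def od (f : C(ℝ × ℝ, ℝ)) : C(ℝ × ℝ, ℝ) := ⟨fun z => (f z - f (z.1, -z.2)) / 2, by fun_prop⟩

theorem ev_apply (f : C(ℝ × ℝ, ℝ)) (s t : ℝ) : ev f (s, t) = (f (s, t) + f (s, -t)) / 2 := rfl
theorem od_apply (f : C(ℝ × ℝ, ℝ)) (s t : ℝ) : od f (s, t) = (f (s, t) - f (s, -t)) / 2 := rfl

theorem Fld.f2' {w p q : C(ℝ × ℝ, ℝ)} (h : Fld w p q) : ∀ s ∈ Set.Icc (0:ℝ) 1,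
    ∀ t ∈ Set.Icc (-1:ℝ) 1, ∀ t' ∈ Set.Icc (-1:ℝ) 1,
    w (s, -t') - w (s, -t) = - (s * ∫ x in t..t', q (s, -x)) := by
  intro s hs t ht t' ht'
  rw [h.f2 s hs (-t) ⟨by linarith [ht.2], by linarith [ht.1]⟩ (-t')
    ⟨by linarith [ht'.2], by linarith [ht'.1]⟩,
    intervalIntegral.integral_comp_neg (fun x => q (s, x)), intervalIntegral.integral_symm]
  ring

theorem Fld.even {w p q : C(ℝ × ℝ, ℝ)} (h : Fld w p q) : Fld (ev w) (ev p) (od q) where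
  f1 a ha b hb t ht := by
    have h1 := h.f1 a ha b hb t ht
    have h2 := h.f1 a ha b hb (-t) ⟨by linarith [ht.2], by linarith [ht.1]⟩
    simp only [ev_apply, od_apply]
    rw [show (w (b, t) + w (b, -t)) / 2 - (w (a, t) + w (a, -t)) / 2
      = 1 / 2 * ((w (b, t) - w (a, t)) + (w (b, -t) - w (a, -t))) by ring, h1, h2,
      ← intervalIntegral.integral_add
      (Continuous.intervalIntegrable (by fun_prop) _ _)
      (Continuous.intervalIntegrable (by fun_prop) _ _), ← intervalIntegral.integral_const_mul]
    congr 1; ext x; ring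
  f2 s hs t ht t' ht' := by
    have h1 := h.f2 s hs t ht t' ht'
    have h2 := h.f2' s hs t ht t' ht'
    simp only [ev_apply, od_apply]
    rw [show (w (s, t') + w (s, -t')) / 2 - (w (s, t) + w (s, -t)) / 2
      = 1 / 2 * ((w (s, t') - w (s, t)) + (w (s, -t') - w (s, -t))) by ring, h1, h2,
      ← sub_eq_add_neg, ← mul_sub, ← intervalIntegral.integral_sub
      (Continuous.intervalIntegrable (by fun_prop) _ _)
      (Continuous.intervalIntegrable (by fun_prop) _ _), ← intervalIntegral.integral_const_mul,
      ← intervalIntegral.integral_const_mul, ← intervalIntegral.integral_const_mul]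
    congr 1; ext x; ring

theorem Fld.odd {w p q : C(ℝ × ℝ, ℝ)} (h : Fld w p q) : Fld (od w) (od p) (ev q) where
  f1 a ha b hb t ht := by
    have h1 := h.f1 a ha b hb t ht
    have h2 := h.f1 a ha b hb (-t) ⟨by linarith [ht.2], by linarith [ht.1]⟩
    simp only [ev_apply, od_apply]
    rw [show (w (b, t) - w (b, -t)) / 2 - (w (a, t) - w (a, -t)) / 2
      = 1 / 2 * ((w (b, t) - w (a, t)) - (w (b, -t) - w (a, -t))) by ring, h1, h2,
      ← intervalIntegral.integral_sub
      (Continuous.intervalIntegrable (by fun_prop) _ _)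
      (Continuous.intervalIntegrable (by fun_prop) _ _), ← intervalIntegral.integral_const_mul]
    congr 1; ext x; ring
  f2 s hs t ht t' ht' := by
    have h1 := h.f2 s hs t ht t' ht'
    have h2 := h.f2' s hs t ht t' ht'
    simp only [ev_apply, od_apply]
    rw [show (w (s, t') - w (s, -t')) / 2 - (w (s, t) - w (s, -t)) / 2
      = 1 / 2 * ((w (s, t') - w (s, t)) - (w (s, -t') - w (s, -t))) by ring, h1, h2,
      sub_neg_eq_add, ← mul_add, ← intervalIntegral.integral_add
      (Continuous.intervalIntegrable (by fun_prop) _ _)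
      (Continuous.intervalIntegrable (by fun_prop) _ _), ← intervalIntegral.integral_const_mul,
      ← intervalIntegral.integral_const_mul, ← intervalIntegral.integral_const_mul]
    congr 1; ext x; ring

/-- The squared norm of `f` on the half strip `t ∈ [0,1]` with the weight `s`. -/
def qn (f : C(ℝ × ℝ, ℝ)) : ℝ := ∫ s in (0:ℝ)..1, s * mm f f s

theorem mm_nonneg (f : C(ℝ × ℝ, ℝ)) (s : ℝ) : 0 ≤ mm f f s := ip_nonneg ip_pe_nonneg_one _

theorem qn_nonneg (f : C(ℝ × ℝ, ℝ)) : 0 ≤ qn f := by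
  apply intervalIntegral.integral_nonneg zero_le_one
  intro s hs
  exact mul_nonneg hs.1 (mm_nonneg _ _)

theorem qn_comb (x y : ℝ) (f g k : C(ℝ × ℝ, ℝ)) :
    ∫ s in (0:ℝ)..1, s * (x * mm f f s + y * mm g g s - mm k k s) = x * qn f + y * qn g - qn k := by
  simp only [qn]
  rw [← intervalIntegral.integral_const_mul, ← intervalIntegral.integral_const_mul,
      ← intervalIntegral.integral_add
      (Continuous.intervalIntegrable (by fun_prop) _ _)
      (Continuous.intervalIntegrable (by fun_prop) _ _),
      ← intervalIntegral.integral_sub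
      (Continuous.intervalIntegrable (by fun_prop) _ _)
      (Continuous.intervalIntegrable (by fun_prop) _ _)]
  congr 1; ext s; ring

/-- Half the squared norm of `f` on the strip `t ∈ [-1,1]` with the weight `s`. -/
def sn (f : C(ℝ × ℝ, ℝ)) : ℝ := qn (ev f) + qn (od f)

theorem strip_even (g : ℝ → ℝ) (hg : Continuous g) :
    ∫ t in (-1:ℝ)..1, g t = ∫ t in (0:ℝ)..1, (g t + g (-t)) := by
  rw [intervalIntegral.integral_add (hg.intervalIntegrable _ _)
    (Continuous.intervalIntegrable (by fun_prop) _ _), intervalIntegral.integral_comp_neg,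
    neg_zero, add_comm, intervalIntegral.integral_add_adjacent_intervals
    (hg.intervalIntegrable _ _) (hg.intervalIntegrable _ _)]

theorem sn_eq (f : C(ℝ × ℝ, ℝ)) :
    sn f = 1 / 2 * ∫ s in (0:ℝ)..1, s * ∫ t in (-1:ℝ)..1, f (s, t) ^ 2 := by
  rw [sn, qn, qn, ← intervalIntegral.integral_add
      (Continuous.intervalIntegrable (by fun_prop) _ _)
      (Continuous.intervalIntegrable (by fun_prop) _ _), ← intervalIntegral.integral_const_mul]
  congr 1; ext s
  rw [strip_even (fun t => f (s, t) ^ 2) (by fun_prop), ← mul_add, mul_left_comm, mm_apply,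
    mm_apply, ip_apply, ip_apply, ← intervalIntegral.integral_add
      (Continuous.intervalIntegrable (by fun_prop) _ _)
      (Continuous.intervalIntegrable (by fun_prop) _ _), ← intervalIntegral.integral_const_mul]
  simp_rw [← intervalIntegral.integral_const_mul]
  congr 1; ext t
  simp only [sl_apply, ev_apply, od_apply, pe_one]; ring

/-- A Crouzeix–Raviart field: `w` has vanishing mean on the three edges `s = 1`, `t = 1`, `t = -1`
of the triangle. -/
structure CR (w p q : C(ℝ × ℝ, ℝ)) : Prop extends Fld w p q where
  b1 : ∫ t in (-1:ℝ)..1, w (1, t) = 0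
  b2 : ∫ s in (0:ℝ)..1, w (s, 1) = 0
  b3 : ∫ s in (0:ℝ)..1, w (s, -1) = 0

variable {w p q : C(ℝ × ℝ, ℝ)}

theorem CR.even_mean (h : CR w p q) : mom [1] (ev w) 1 = 0 := by
  have := h.b1
  rw [strip_even (fun t => w (1, t)) (by fun_prop)] at this
  have e : mom [1] (ev w) 1 = 1 / 2 * ∫ t in (0:ℝ)..1, (w (1, t) + w (1, -t)) := by
    rw [mom_apply, ip_apply, ← intervalIntegral.integral_const_mul]
    congr 1; ext t; simp only [sl_apply, ev_apply, pe_one]; ring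
  rw [e, this, mul_zero]

theorem CR.even_side (h : CR w p q) : ∫ s in (0:ℝ)..1, ev w (s, 1) = 0 := by
  simp only [ev_apply]
  rw [intervalIntegral.integral_div, intervalIntegral.integral_add
      (Continuous.intervalIntegrable (by fun_prop) _ _)
      (Continuous.intervalIntegrable (by fun_prop) _ _), h.b2, h.b3]; simp

theorem CR.odd_side (h : CR w p q) : ∫ s in (0:ℝ)..1, od w (s, 1) = 0 := by
  simp only [od_apply]
  rw [intervalIntegral.integral_div, intervalIntegral.integral_sub
      (Continuous.intervalIntegrable (by fun_prop) _ _)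
      (Continuous.intervalIntegrable (by fun_prop) _ _), h.b2, h.b3]; simp

theorem od_zero (s : ℝ) : od w (s, 0) = 0 := by rw [od_apply]; simp

theorem CR.odd_a (h : CR w p q) :
    qn (od w) ≤ 89/2500 * (0.6 * qn (od p) + 4 * qn (ev q)) := by
  have := odd2D h.toFld.odd (fun s _ => od_zero s) h.odd_side _ _ _ _ _ _ _ _ _ _ _
    (by norm_num) (by norm_num) (by norm_num) odd_psd_a (by norm_num)
  rw [qn_comb] at this
  linarith

theorem CR.odd_b (h : CR w p q) :
    qn (od w) ≤ 89/2500 * (1.2 * qn (od p) + 2.74 * qn (ev q)) := by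
  have := odd2D h.toFld.odd (fun s _ => od_zero s) h.odd_side _ _ _ _ _ _ _ _ _ _ _
    (by norm_num) (by norm_num) (by norm_num) odd_psd_b (by norm_num)
  rw [qn_comb] at this
  linarith

theorem CR.even_ab (h : CR w p q) (ka kb : ℝ) (hka : 0 ≤ ka) (hkb : 4 ≤ kb)
    (h3 : 1 ≤ (ka-1)*((3*(89/2500)*kb-0.345)*16.2)) :
    qn (ev w) ≤ 89/2500 * (ka * qn (ev p) + kb * qn (od q)) := by
  have := even2D h.toFld.even h.even_mean h.even_side ka kb hka (by linarith) (by linarith) h3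
  rw [qn_comb] at this
  linarith

variable {a b : ℝ}

theorem CR.o1 (h : CR w p q) (ha : 1 ≤ a) (hb : 4 ≤ b) :
    qn (od w) ≤ 89/2500 * (0.6 * a * qn (od p) + b * qn (ev q)) := by
  have h1 := mul_le_mul_of_nonneg_right ha (qn_nonneg (od p))
  have h2 := mul_le_mul_of_nonneg_right hb (qn_nonneg (ev q))
  linarith [h.odd_a]

/-- The weight `b` is compared with `6`: below it `odd_b` applies since then `a ≥ 1.2`, above it `odd_a`
since `0.685 * 6 ≥ 4`. -/
theorem CR.o2 (h : CR w p q) (hb : 4 ≤ b) (hab : a * (b - 1) = b) :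
    qn (od w) ≤ 89/2500 * (a * qn (od p) + 0.685 * b * qn (ev q)) := by
  have ha : 1 ≤ a := by by_contra!; nlinarith
  have hp := qn_nonneg (od p)
  have hq := qn_nonneg (ev q)
  rcases le_total b 6 with h6 | h6
  · have h1 : 1.2 ≤ a := by by_contra!; nlinarith
    have := mul_le_mul_of_nonneg_right h1 hp
    have := mul_le_mul_of_nonneg_right hb hq
    linarith [h.odd_b]
  · have := mul_le_mul_of_nonneg_right ha hp
    have := mul_le_mul_of_nonneg_right h6 hq
    linarith [h.odd_a]

theorem CR.e1 (h : CR w p q) (hb : 4 ≤ b) (hab : a * (b - 1) = b) :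
    qn (ev w) ≤ 89/2500 * (a * qn (ev p) + 1.4 * b * qn (od q)) := by
  have ha : 1 ≤ a := by by_contra!; nlinarith
  refine h.even_ab a (1.4 * b) (by linarith) (by linarith) ?_
  have e : (a - 1) * (b - 1) = 1 := by linarith
  nlinarith

theorem CR.e2 (h : CR w p q) (hb : 4 ≤ b) (hab : a * (b - 1) = b) :
    qn (ev w) ≤ 89/2500 * (1.315 * a * qn (ev p) + b * qn (od q)) := by
  have ha : 1 ≤ a := by by_contra!; nlinarith
  refine h.even_ab (1.315 * a) b (by linarith) (by linarith) ?_
  have e : (a - 1) * (b - 1) = 1 := by linarith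
  nlinarith

/-- The estimate for a field `(wξ, wη)` with symmetric derivative `X`, `M`, `Y`. The mixed
derivative `M` receives contributions from both components. Its odd part costs `1.4` in `e1` and
`0.6` in `o1`, its even part `0.685` in `o2` and `1.315` in `e2`, and both pairs add up to `2`. -/
theorem strip_fm {wξ wη X M Y : C(ℝ × ℝ, ℝ)} (hξ : CR wξ X M) (hη : CR wη M Y) (hb : 4 ≤ b)
    (hab : a * (b - 1) = b) :
    a * sn wξ + b * sn wη ≤ 89/2500 * (a ^ 2 * sn X + 2 * a * b * sn M + b ^ 2 * sn Y) := by
  have ha : 1 ≤ a := by by_contra!; nlinarith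
  have h1 := mul_le_mul_of_nonneg_left (hξ.e1 hb hab) (show 0 ≤ a by linarith)
  have h2 := mul_le_mul_of_nonneg_left (hξ.o2 hb hab) (show 0 ≤ a by linarith)
  have h3 := mul_le_mul_of_nonneg_left (hη.e2 hb hab) (show 0 ≤ b by linarith)
  have h4 := mul_le_mul_of_nonneg_left (hη.o1 ha hb) (show 0 ≤ b by linarith)
  simp only [sn]
  linarith

/-- The estimate for a single Crouzeix–Raviart field. -/
theorem strip_cr (h : CR w p q) (hb : 4 ≤ b) (hab : a * (b - 1) = b) :
    sn w ≤ 2 * (89/2500) * (a * sn p + b * sn q) := by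
  have ha : 1 ≤ a := by by_contra!; nlinarith
  have h1 := h.e2 hb hab
  have h2 := h.o1 ha hb
  have p1 := mul_nonneg (show 0 ≤ a by linarith) (qn_nonneg (ev p))
  have p2 := mul_nonneg (show 0 ≤ a by linarith) (qn_nonneg (od p))
  have p3 := mul_nonneg (show 0 ≤ b by linarith) (qn_nonneg (ev q))
  have p4 := mul_nonneg (show 0 ≤ b by linarith) (qn_nonneg (od q))
  simp only [sn]
  linarith

end

/-! ### Affine parametrisation of the triangle -/

/-- The determinant of the pair of plane vectors `m`, `d`. -/
def det2 (m d : Pt) : ℝ := m.1 * d.2 - m.2 * d.1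

/-- The parametrisation `(s,t) ↦ V + s (m + t d)` of the triangle with vertices `V`, `V + (m - d)`,
`V + (m + d)` by `[0,1] × [-1,1]`. -/
def par (V m d : Pt) (z : ℝ × ℝ) : Pt := V + z.1 • (m + z.2 • d)

/-- The triangle parametrised by `par V m d`. -/
def tri (V m d : Pt) : Set Pt := Tri V (V + (m - d)) (V + (m + d))

theorem mem_tri {V m d x : Pt} : x ∈ tri V m d ↔
    ∃ s ∈ Set.Icc (0:ℝ) 1, ∃ t ∈ Set.Icc (-1:ℝ) 1, par V m d (s, t) = x := by
  rw [tri, Tri, convexHull_insert (Set.insert_nonempty _ _), convexHull_pair, mem_convexJoin]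
  simp only [Set.mem_singleton_iff, exists_eq_left, segment_eq_image', Set.mem_image]
  constructor
  · rintro ⟨_, ⟨θ, hθ, rfl⟩, s, hs, rfl⟩
    refine ⟨s, hs, 2 * θ - 1, ⟨by linarith [hθ.1], by linarith [hθ.2]⟩, ?_⟩
    ext <;> simp [par] <;> ring
  · rintro ⟨s, hs, t, ht, rfl⟩
    refine ⟨_, ⟨(t + 1) / 2, ⟨by linarith [ht.1], by linarith [ht.2]⟩, rfl⟩, s, hs, ?_⟩
    ext <;> simp [par] <;> ring

theorem par_mem {V m d : Pt} {s t : ℝ} (hs : s ∈ Set.Icc (0:ℝ) 1) (ht : t ∈ Set.Icc (-1:ℝ) 1) :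
    par V m d (s, t) ∈ tri V m d := mem_tri.2 ⟨s, hs, t, ht, rfl⟩

/-- The retraction of the plane onto the strip `[0,1] × [-1,1]`. -/
def clampS (z : ℝ × ℝ) : ℝ × ℝ := (max 0 (min 1 z.1), max (-1) (min 1 z.2))

/-- A function on the triangle, read in the coordinates `(s,t)` and extended constantly beyond
the strip `[0,1] × [-1,1]`. -/
def pull (V m d : Pt) (G : Pt → ℝ) (hG : ContinuousOn G (tri V m d)) : C(ℝ × ℝ, ℝ) :=
  ⟨fun z => G (par V m d (clampS z)), hG.comp_continuous (by unfold par clampS; fun_prop)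
    fun z => par_mem ⟨by simp, by simp⟩ ⟨by simp, by simp⟩⟩

theorem pull_apply {V m d : Pt} {G : Pt → ℝ} (hG : ContinuousOn G (tri V m d)) {s t : ℝ}
    (hs : s ∈ Set.Icc (0:ℝ) 1) (ht : t ∈ Set.Icc (-1:ℝ) 1) :
    pull V m d G hG (s, t) = G (par V m d (s, t)) := by
  simp [pull, clampS, hs.1, hs.2, ht.1, ht.2]

theorem par_hasFDerivAt (V m d : Pt) (z : ℝ × ℝ) : HasFDerivAt (par V m d)
    ((Matrix.toLin (.finTwoProd ℝ) (.finTwoProd ℝ)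
      !![m.1 + z.2 * d.1, z.1 * d.1; m.2 + z.2 * d.2, z.1 * d.2]).toContinuousLinearMap) z := by
  rw [Matrix.toLin_finTwoProd_toContinuousLinearMap]
  have h : ∀ v a b : ℝ, HasFDerivAt (fun z : ℝ × ℝ => v + z.1 * (a + z.2 * b))
      ((a + z.2 * b) • ContinuousLinearMap.fst ℝ ℝ ℝ + (z.1 * b) • ContinuousLinearMap.snd ℝ ℝ ℝ) z := by
    intro v a b
    have h1 : HasFDerivAt (fun z : ℝ × ℝ => z.1) (ContinuousLinearMap.fst ℝ ℝ ℝ) z := hasFDerivAt_fst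
    have h2 : HasFDerivAt (fun z : ℝ × ℝ => z.2) (ContinuousLinearMap.snd ℝ ℝ ℝ) z := hasFDerivAt_snd
    have := (h1.mul ((h2.mul_const b).const_add a)).const_add v
    rw [smul_smul, add_comm (_ • _)] at this
    exact this
  exact (h V.1 m.1 d.1).prodMk (h V.2 m.2 d.2)

theorem par_det (m d : Pt) (z : ℝ × ℝ) :
    ((Matrix.toLin (.finTwoProd ℝ) (.finTwoProd ℝ)
      !![m.1 + z.2 * d.1, z.1 * d.1; m.2 + z.2 * d.2, z.1 * d.2]).toContinuousLinearMap).det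
      = z.1 * det2 m d := by
  simp only [LinearMap.det_toContinuousLinearMap, LinearMap.det_toLin, Matrix.det_fin_two_of, det2]
  ring

theorem par_inj {V m d : Pt} (hJ : det2 m d ≠ 0) :
    Set.InjOn (par V m d) (Set.Ioc (0:ℝ) 1 ×ˢ Set.Icc (-1:ℝ) 1) := by
  rintro ⟨s, t⟩ ⟨hs, -⟩ ⟨s', t'⟩ - h
  have e1 : s * (m.1 + t * d.1) = s' * (m.1 + t' * d.1) := by
    have := congrArg Prod.fst h
    simp [par] at this; linarith
  have e2 : s * (m.2 + t * d.2) = s' * (m.2 + t' * d.2) := by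
    have := congrArg Prod.snd h
    simp [par] at this; linarith
  have h1 : (s - s') * det2 m d = 0 := by rw [det2]; linear_combination d.2 * e1 - d.1 * e2
  have h2 : (s * t - s' * t') * det2 m d = 0 := by
    rw [det2]; linear_combination m.1 * e2 - m.2 * e1
  have h3 : s = s' := by
    have := (mul_eq_zero.1 h1).resolve_right hJ; linarith
  subst h3
  have h4 : s * (t - t') = 0 := by
    have := (mul_eq_zero.1 h2).resolve_right hJ; linarith
  have h5 := (mul_eq_zero.1 h4).resolve_left (ne_of_gt hs.1)
  rw [show t = t' by linarith]

theorem par_image {V m d : Pt} (hJ : det2 m d ≠ 0) :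
    par V m d '' (Set.Ioc (0:ℝ) 1 ×ˢ Set.Icc (-1:ℝ) 1) = tri V m d \ {V} := by
  ext x
  rw [Set.mem_sdiff, mem_tri, Set.mem_image]
  constructor
  · rintro ⟨⟨s, t⟩, ⟨hs, ht⟩, rfl⟩
    refine ⟨⟨s, ⟨hs.1.le, hs.2⟩, t, ht, rfl⟩, fun h => ?_⟩
    rw [Set.mem_singleton_iff, par, add_eq_left, smul_eq_zero] at h
    rcases h with h | h
    · exact hs.1.ne' h
    · apply hJ
      have e1 : m.1 + t * d.1 = 0 := by have := congrArg Prod.fst h; simpa using this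
      have e2 : m.2 + t * d.2 = 0 := by have := congrArg Prod.snd h; simpa using this
      rw [det2]; linear_combination d.2 * e1 - d.1 * e2
  · rintro ⟨⟨s, hs, t, ht, rfl⟩, h⟩
    refine ⟨(s, t), ⟨⟨lt_of_le_of_ne hs.1 ?_, hs.2⟩, ht⟩, rfl⟩
    rintro rfl
    exact h (by simp [par])

theorem integral_tri {V m d : Pt} (hJ : det2 m d ≠ 0) (G : Pt → ℝ)
    (hG : ContinuousOn G (tri V m d)) :
    ∫ x in tri V m d, G x ^ 2 = 2 * |det2 m d| * sn (pull V m d G hG) := by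
  have h1 : (tri V m d \ {V} : Set Pt) =ᵐ[volume] tri V m d :=
    sdiff_null_ae_eq_self (measure_singleton V)
  have hms : MeasurableSet (Set.Ioc (0:ℝ) 1 ×ˢ Set.Icc (-1:ℝ) 1) :=
    measurableSet_Ioc.prod measurableSet_Icc
  rw [← setIntegral_congr_set h1, ← par_image hJ,
    integral_image_eq_integral_abs_det_fderiv_smul volume hms
      (fun z _ => (par_hasFDerivAt V m d z).hasFDerivWithinAt) (par_inj hJ)]
  have h2 : ∀ z ∈ Set.Ioc (0:ℝ) 1 ×ˢ Set.Icc (-1:ℝ) 1,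
      |((Matrix.toLin (.finTwoProd ℝ) (.finTwoProd ℝ)
      !![m.1 + z.2 * d.1, z.1 * d.1; m.2 + z.2 * d.2, z.1 * d.2]).toContinuousLinearMap).det|
        • G (par V m d z) ^ 2 = |det2 m d| * (z.1 * pull V m d G hG z ^ 2) := by
    rintro ⟨s, t⟩ ⟨hs, ht⟩
    rw [par_det, pull_apply hG ⟨hs.1.le, hs.2⟩ ht, abs_mul, abs_of_pos hs.1, smul_eq_mul]; ring
  rw [setIntegral_congr_fun hms h2, Measure.volume_eq_prod, setIntegral_prod]
  · rw [sn_eq, intervalIntegral.integral_of_le zero_le_one]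
    simp only [integral_const_mul, intervalIntegral.integral_of_le (show (-1:ℝ) ≤ 1 by norm_num),
      integral_Icc_eq_integral_Ioc]
    ring
  · refine IntegrableOn.mono_set (ContinuousOn.integrableOn_compact
      (isCompact_Icc.prod isCompact_Icc) (Continuous.continuousOn (by fun_prop)))
      (Set.prod_mono Set.Ioc_subset_Icc_self subset_rfl)

/-! ### Gradient and Hessian in affine coordinates -/

/-- The gradient in terms of `ξ = ∂_m u` and `η = ∂_d u`. If the two edges `m - d`, `m + d` are equally
long (`e = 1`) the quadratic form is diagonal; otherwise a rank-one term with the nonnegative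
coefficient `σ = (1 - e)/((1 - c²)(e - c²))` is added. -/
theorem grad_alg {x1 y1 x2 y2 H c e ux uy : ℝ} (hH : 0 < H) (h1 : x1 ^ 2 + y1 ^ 2 = H)
    (h2 : x1 * x2 + y1 * y2 = c * H) (h3 : x2 ^ 2 + y2 ^ 2 = e * H) (ξ η : ℝ)
    (hξ : ξ - η = x1 * ux + y1 * uy) (hη : ξ + η = x2 * ux + y2 * uy) (hc : -1 < c) (hc1 : c < 1)
    (he : c ^ 2 < e) :
    H * (ux ^ 2 + uy ^ 2) = 2 / (1 + c) * ξ ^ 2 + 2 / (1 - c) * η ^ 2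
      + (1 - e) / ((1 - c ^ 2) * (e - c ^ 2)) * ((1 - c) * ξ + (1 + c) * η) ^ 2 := by
  have hD : (x1 * y2 - y1 * x2) ^ 2 = H ^ 2 * (e - c ^ 2) := by
    have : (x1 * y2 - y1 * x2) ^ 2
        = (x1 ^ 2 + y1 ^ 2) * (x2 ^ 2 + y2 ^ 2) - (x1 * x2 + y1 * y2) ^ 2 := by ring
    rw [this, h1, h2, h3]; ring
  have e1 : (x1 * y2 - y1 * x2) ^ 2 * (ux ^ 2 + uy ^ 2) = (x2 ^ 2 + y2 ^ 2) * (ξ - η) ^ 2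
      - 2 * (x1 * x2 + y1 * y2) * (ξ - η) * (ξ + η) + (x1 ^ 2 + y1 ^ 2) * (ξ + η) ^ 2 := by
    rw [hξ, hη]; ring
  rw [hD, h1, h2, h3] at e1
  have e2 : (e - c ^ 2) * (H * (ux ^ 2 + uy ^ 2)) = e * (ξ - η) ^ 2
      - 2 * c * (ξ - η) * (ξ + η) + (ξ + η) ^ 2 := by
    apply mul_left_cancel₀ hH.ne'; linarith
  have p1 : 1 + c ≠ 0 := by linarith
  have p2 : 1 - c ≠ 0 := by linarith
  have p3 : e - c ^ 2 ≠ 0 := by linarith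
  have p4 : (1 - c ^ 2) ≠ 0 := by
    rw [show 1 - c ^ 2 = (1 + c) * (1 - c) by ring]; exact mul_ne_zero p1 p2
  apply mul_left_cancel₀ p3
  rw [e2, show 1 - c ^ 2 = (1 + c) * (1 - c) by ring]
  field_simp
  ring

/-- If `H |∇u|²` is the quadratic form of the matrix `G + σ w wᵀ` with `G` diagonal, then `H² |D²u|²` is
the trace of `((G + σ w wᵀ) S)²`, where `S` has entries `X`, `M`, `Y`. Only the term
`σ² (wᵀ S w)²` is dropped here. -/
theorem hess_alg {x1 y1 x2 y2 H c e a b g : ℝ} (hH : 0 < H) (h1 : x1 ^ 2 + y1 ^ 2 = H)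
    (h2 : x1 * x2 + y1 * y2 = c * H) (h3 : x2 ^ 2 + y2 ^ 2 = e * H) (X M Y : ℝ)
    (k1 : X - 2 * M + Y = x1 ^ 2 * a + 2 * x1 * y1 * b + y1 ^ 2 * g)
    (k2 : X - Y = x1 * x2 * a + (x1 * y2 + x2 * y1) * b + y1 * y2 * g)
    (k3 : X + 2 * M + Y = x2 ^ 2 * a + 2 * x2 * y2 * b + y2 ^ 2 * g) (hc : -1 < c) (hc1 : c < 1)
    (he : c ^ 2 < e) :
    (2 / (1 + c)) ^ 2 * X ^ 2 + 2 * (2 / (1 + c)) * (2 / (1 - c)) * M ^ 2 + (2 / (1 - c)) ^ 2 * Y ^ 2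
      + 2 * ((1 - e) / ((1 - c ^ 2) * (e - c ^ 2))) * (2 / (1 + c) * ((1 - c) * X + (1 + c) * M) ^ 2
        + 2 / (1 - c) * ((1 - c) * M + (1 + c) * Y) ^ 2)
      ≤ H ^ 2 * (a ^ 2 + 2 * b ^ 2 + g ^ 2) := by
  have hD : (x1 * y2 - y1 * x2) ^ 2 = H ^ 2 * (e - c ^ 2) := by
    have : (x1 * y2 - y1 * x2) ^ 2
        = (x1 ^ 2 + y1 ^ 2) * (x2 ^ 2 + y2 ^ 2) - (x1 * x2 + y1 * y2) ^ 2 := by ring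
    rw [this, h1, h2, h3]; ring
  have e1 : ((x1 * y2 - y1 * x2) ^ 2) ^ 2 * (a ^ 2 + 2 * b ^ 2 + g ^ 2)
      = (x2 ^ 2 + y2 ^ 2) ^ 2 * (X - 2 * M + Y) ^ 2
        - 4 * (x2 ^ 2 + y2 ^ 2) * (x1 * x2 + y1 * y2) * (X - 2 * M + Y) * (X - Y)
        + 2 * ((x1 ^ 2 + y1 ^ 2) * (x2 ^ 2 + y2 ^ 2) + (x1 * x2 + y1 * y2) ^ 2) * (X - Y) ^ 2
        + 2 * (x1 * x2 + y1 * y2) ^ 2 * (X - 2 * M + Y) * (X + 2 * M + Y)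
        - 4 * (x1 ^ 2 + y1 ^ 2) * (x1 * x2 + y1 * y2) * (X - Y) * (X + 2 * M + Y)
        + (x1 ^ 2 + y1 ^ 2) ^ 2 * (X + 2 * M + Y) ^ 2 := by
    rw [k1, k2, k3]; ring
  rw [hD, h1, h2, h3] at e1
  have e2 : (e - c ^ 2) ^ 2 * (H ^ 2 * (a ^ 2 + 2 * b ^ 2 + g ^ 2))
      = e ^ 2 * (X - 2 * M + Y) ^ 2 - 4 * e * c * (X - 2 * M + Y) * (X - Y)
        + 2 * (e + c ^ 2) * (X - Y) ^ 2 + 2 * c ^ 2 * (X - 2 * M + Y) * (X + 2 * M + Y)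
        - 4 * c * (X - Y) * (X + 2 * M + Y) + (X + 2 * M + Y) ^ 2 := by
    apply mul_left_cancel₀ (pow_ne_zero 2 hH.ne'); linarith
  have p1 : 1 + c ≠ 0 := by linarith
  have p2 : 1 - c ≠ 0 := by linarith
  have p3 : e - c ^ 2 ≠ 0 := by linarith
  have key : H ^ 2 * (a ^ 2 + 2 * b ^ 2 + g ^ 2) =
    (2 / (1 + c)) ^ 2 * X ^ 2 + 2 * (2 / (1 + c)) * (2 / (1 - c)) * M ^ 2 + (2 / (1 - c)) ^ 2 * Y ^ 2
      + 2 * ((1 - e) / ((1 - c ^ 2) * (e - c ^ 2))) * (2 / (1 + c) * ((1 - c) * X + (1 + c) * M) ^ 2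
        + 2 / (1 - c) * ((1 - c) * M + (1 + c) * Y) ^ 2)
      + (1 - e) ^ 2 * ((1 - c) * ((1 - c) * X + (1 + c) * M) + (1 + c) * ((1 - c) * M + (1 + c) * Y)) ^ 2
        / ((1 - c ^ 2) * (e - c ^ 2)) ^ 2 := by
    apply mul_left_cancel₀ (pow_ne_zero 2 p3)
    rw [e2, show 1 - c ^ 2 = (1 + c) * (1 - c) by ring]
    field_simp
    ring
  rw [key]
  linarith [show 0 ≤ (1 - e) ^ 2 * ((1 - c) * ((1 - c) * X + (1 + c) * M)
    + (1 + c) * ((1 - c) * M + (1 + c) * Y)) ^ 2 / ((1 - c ^ 2) * (e - c ^ 2)) ^ 2 by positivity]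

theorem par_hasDerivAt_fst (V m d : Pt) (s t : ℝ) :
    HasDerivAt (fun x => par V m d (x, t)) (m + t • d) s := by
  have := ((hasDerivAt_id s).smul_const (m + t • d)).const_add V
  rw [one_smul] at this
  exact this

theorem par_hasDerivAt_snd (V m d : Pt) (s t : ℝ) :
    HasDerivAt (fun x => par V m d (s, x)) (s • d) t := by
  have := ((((hasDerivAt_id t).smul_const d).const_add m).const_smul s).const_add V
  rw [one_smul] at this
  exact this

/-- A `C¹` function with vanishing mean on the edges of the triangle is a Crouzeix–Raviart field
in the coordinates `(s,t)`. -/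
theorem cr_of_diff {V m d : Pt} {g gp gq : Pt → ℝ} (hg : ContinuousOn g (tri V m d))
    (hgp : ContinuousOn gp (tri V m d)) (hgq : ContinuousOn gq (tri V m d))
    (hd : ∀ x ∈ tri V m d, DifferentiableAt ℝ g x)
    (hp : ∀ x ∈ tri V m d, fderiv ℝ g x m = gp x) (hq : ∀ x ∈ tri V m d, fderiv ℝ g x d = gq x)
    (e1 : ∫ t in (0:ℝ)..1, g (V + t • (m - d)) = 0)
    (e2 : ∫ t in (0:ℝ)..1, g (V + t • (m + d)) = 0)
    (e3 : ∫ t in (0:ℝ)..1, g (V + (m - d) + t • (V + (m + d) - (V + (m - d)))) = 0) :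
    CR (pull V m d g hg) (pull V m d gp hgp) (pull V m d gq hgq) where
  f1 a ha b hb t ht := by
    have hI : Set.uIcc a b ⊆ Set.Icc (0:ℝ) 1 := Set.uIcc_subset_Icc ha hb
    rw [pull_apply hg hb ht, pull_apply hg ha ht]
    symm
    refine intervalIntegral.integral_eq_sub_of_hasDerivAt
      (f := fun x => g (par V m d (x, t))) (fun x hx => ?_)
      (Continuous.intervalIntegrable (by fun_prop) _ _)
    have hm := par_mem (V := V) (m := m) (d := d) (hI hx) ht
    have := (hd _ hm).hasFDerivAt.comp_hasDerivAt x (par_hasDerivAt_fst V m d x t)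
    rwa [map_add, map_smul, hp _ hm, hq _ hm, smul_eq_mul, ← pull_apply hgp (hI hx) ht,
      ← pull_apply hgq (hI hx) ht] at this
  f2 s hs t ht t' ht' := by
    have hI : Set.uIcc t t' ⊆ Set.Icc (-1:ℝ) 1 := Set.uIcc_subset_Icc ht ht'
    rw [pull_apply hg hs ht, pull_apply hg hs ht', ← intervalIntegral.integral_const_mul]
    symm
    refine intervalIntegral.integral_eq_sub_of_hasDerivAt
      (f := fun x => g (par V m d (s, x))) (fun x hx => ?_)
      (Continuous.intervalIntegrable (by fun_prop) _ _)
    have hm := par_mem (V := V) (m := m) (d := d) hs (hI hx)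
    have := (hd _ hm).hasFDerivAt.comp_hasDerivAt x (par_hasDerivAt_snd V m d s x)
    rwa [map_smul, hq _ hm, smul_eq_mul, ← pull_apply hgq hs (hI hx)] at this
  b1 := by
    have h := intervalIntegral.integral_comp_mul_sub (a := 0) (b := 1)
      (fun t => pull V m d g hg (1, t)) (two_ne_zero' ℝ) 1
    norm_num at h
    have h' : ∫ x in (0:ℝ)..1, pull V m d g hg (1, 2 * x - 1) = 0 := by
      refine Eq.trans ?_ e3
      apply intervalIntegral.integral_congr
      intro x hx
      rw [Set.uIcc_of_le zero_le_one] at hx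
      simp only
      rw [pull_apply hg (by norm_num) ⟨by linarith [hx.1], by linarith [hx.2]⟩]
      congr 1; ext <;> simp [par] <;> ring
    linarith
  b2 := by
    refine Eq.trans ?_ e2
    apply intervalIntegral.integral_congr
    intro x hx
    rw [Set.uIcc_of_le zero_le_one] at hx
    simp only
    rw [pull_apply hg hx (by norm_num)]
    congr 1; ext <;> simp [par]
  b3 := by
    refine Eq.trans ?_ e1
    apply intervalIntegral.integral_congr
    intro x hx
    rw [Set.uIcc_of_le zero_le_one] at hx
    simp only
    rw [pull_apply hg hx (by norm_num)]
    congr 1; ext <;> simp [par] <;> ring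

/-! ### The estimate with the two longest edges issuing from one vertex -/

theorem clm_expand (L : Pt →L[ℝ] ℝ) (v : Pt) : L v = v.1 * L (1, 0) + v.2 * L (0, 1) := by
  conv_lhs => rw [show v = v.1 • ((1:ℝ), (0:ℝ)) + v.2 • ((0:ℝ), (1:ℝ)) by ext <;> simp]
  rw [map_add, map_smul, map_smul, smul_eq_mul, smul_eq_mul]

/-- The field `∂_w u` with `w = (1 - c) m + (1 + c) d` accounts for the rank-one term of `grad_alg`. The
bound on the diagonal part is `strip_fm`, the one on the rank-one part is `strip_cr`, and the two
together are bounded by the Hessian through `hess_alg`. -/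
theorem core {V m d : Pt} {u : Pt → ℝ} (hu : Smooth2 u (tri V m d)) (hJ : det2 m d ≠ 0)
    {H c e : ℝ} (hH : 0 < H) (h1 : (m - d).1 ^ 2 + (m - d).2 ^ 2 = H)
    (h2 : (m - d).1 * (m + d).1 + (m - d).2 * (m + d).2 = c * H)
    (h3 : (m + d).1 ^ 2 + (m + d).2 ^ 2 = e * H) (hc : 1 / 2 ≤ c) (hc1 : c < 1) (he : c ^ 2 < e)
    (he1 : e ≤ 1)
    (e1 : ∀ v, ∫ t in (0:ℝ)..1, fderiv ℝ u (V + t • (m - d)) v = 0)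
    (e2 : ∀ v, ∫ t in (0:ℝ)..1, fderiv ℝ u (V + t • (m + d)) v = 0)
    (e3 : ∀ v, ∫ t in (0:ℝ)..1,
      fderiv ℝ u (V + (m - d) + t • (V + (m + d) - (V + (m - d)))) v = 0) :
    h1sq u (tri V m d) ≤ 89 / 2500 * H * h2sq u (tri V m d) := by
  obtain ⟨U, hU, hKU, hC⟩ := hu
  have hcomp : IsCompact (tri V m d) := by
    exact Set.Finite.isCompact_convexHull ℝ (Set.toFinite _)
  have hC1 : ContDiffOn ℝ 1 (fderiv ℝ u) U := hC.fderiv_of_isOpen hU (by norm_num)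
  have hF : ContinuousOn (fderiv ℝ u) (tri V m d) := hC1.continuousOn.mono hKU
  have hF2 : ContinuousOn (fderiv ℝ (fderiv ℝ u)) (tri V m d) :=
    (hC1.continuousOn_fderiv_of_isOpen hU le_rfl).mono hKU
  have hdF : ∀ x ∈ tri V m d, DifferentiableAt ℝ (fderiv ℝ u) x := fun x hx =>
    (hC1.differentiableOn one_ne_zero).differentiableAt (hU.mem_nhds (hKU hx))
  have hsymm : ∀ x ∈ tri V m d, ∀ v v',
      fderiv ℝ (fderiv ℝ u) x v v' = fderiv ℝ (fderiv ℝ u) x v' v := fun x hx v v' =>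
    ((hC.contDiffAt (hU.mem_nhds (hKU hx))).isSymmSndFDerivAt (by simp)) v v'
  have hD : ∀ v, ContinuousOn (fun x => fderiv ℝ u x v) (tri V m d) := fun v =>
    hF.clm_apply continuousOn_const
  have hDD : ∀ v v', ContinuousOn (fun x => fderiv ℝ (fderiv ℝ u) x v v') (tri V m d) := fun v v' =>
    (hF2.clm_apply continuousOn_const).clm_apply continuousOn_const
  have hdD : ∀ v, ∀ x ∈ tri V m d, DifferentiableAt ℝ (fun x => fderiv ℝ u x v) x := fun v x hx =>
    (hdF x hx).clm_apply (differentiableAt_const v)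
  have hDf : ∀ v, ∀ x ∈ tri V m d, ∀ v', fderiv ℝ (fun x => fderiv ℝ u x v) x v'
      = fderiv ℝ (fderiv ℝ u) x v' v := by
    intro v x hx v'
    rw [fderiv_clm_apply (hdF x hx) (differentiableAt_const v)]
    simp
  obtain ⟨w, hw⟩ : ∃ w : Pt, w = (1 - c) • m + (1 + c) • d := ⟨_, rfl⟩
  have crξ := cr_of_diff (hD m) (hDD m m) (hDD m d) (hdD m) (fun x hx => hDf m x hx m)
    (fun x hx => by rw [hDf m x hx d, hsymm x hx]) (e1 m) (e2 m) (e3 m)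
  have crη := cr_of_diff (hD d) (hDD m d) (hDD d d) (hdD d) (fun x hx => hDf d x hx m)
    (fun x hx => hDf d x hx d) (e1 d) (e2 d) (e3 d)
  have crw := cr_of_diff (hD w) (hDD m w) (hDD d w) (hdD w) (fun x hx => hDf w x hx m)
    (fun x hx => hDf w x hx d) (e1 w) (e2 w) (e3 w)
  have p1 : 0 < 1 + c := by linarith
  have p2 : 0 < 1 - c := by linarith
  have p3 : 0 < e - c ^ 2 := by linarith
  obtain ⟨a, ha⟩ : ∃ a, a = 2 / (1 + c) := ⟨_, rfl⟩
  obtain ⟨b, hb⟩ : ∃ b, b = 2 / (1 - c) := ⟨_, rfl⟩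
  obtain ⟨σ, hσ⟩ : ∃ σ, σ = (1 - e) / ((1 - c ^ 2) * (e - c ^ 2)) := ⟨_, rfl⟩
  have hσ0 : 0 ≤ σ := by
    rw [hσ]; apply div_nonneg (by linarith)
    apply mul_nonneg _ p3.le; nlinarith
  have hb4 : 4 ≤ b := by rw [hb, le_div_iff₀ p2]; linarith
  have hab : a * (b - 1) = b := by rw [ha, hb]; field_simp; ring
  have i1 := strip_fm crξ crη hb4 hab
  have i2 := strip_cr crw hb4 hab
  have hJ0 : 0 ≤ 2 * |det2 m d| := by positivity
  have j1 := mul_le_mul_of_nonneg_left i1 hJ0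
  have j2 := mul_le_mul_of_nonneg_left (mul_le_mul_of_nonneg_left i2 hσ0) hJ0
  have q1 := integral_tri hJ _ (hD m)
  have q2 := integral_tri hJ _ (hD d)
  have q3 := integral_tri hJ _ (hD w)
  have q4 := integral_tri hJ _ (hDD m m)
  have q5 := integral_tri hJ _ (hDD m d)
  have q6 := integral_tri hJ _ (hDD d d)
  have q7 := integral_tri hJ _ (hDD m w)
  have q8 := integral_tri hJ _ (hDD d w)
  have int : ∀ {G : Pt → ℝ}, ContinuousOn G (tri V m d) → ∀ k : ℝ,
      IntegrableOn (fun x => k * G x ^ 2) (tri V m d) := fun hG k =>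
    (continuousOn_const.mul (hG.pow 2)).integrableOn_compact hcomp
  have hms : MeasurableSet (tri V m d) := hcomp.measurableSet
  have s1 : H * h1sq u (tri V m d) = a * (∫ x in tri V m d, fderiv ℝ u x m ^ 2)
      + b * (∫ x in tri V m d, fderiv ℝ u x d ^ 2)
      + σ * (∫ x in tri V m d, fderiv ℝ u x w ^ 2) := by
    have g1 : IntegrableOn (fun x => a * fderiv ℝ u x m ^ 2 + b * fderiv ℝ u x d ^ 2)
        (tri V m d) := (int (hD m) a).add (int (hD d) b)
    rw [h1sq, ← integral_const_mul, ← integral_const_mul, ← integral_const_mul,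
      ← integral_const_mul, ← integral_add (int (hD m) a) (int (hD d) b),
      ← integral_add g1 (int (hD w) σ)]
    apply setIntegral_congr_fun hms
    intro x hx
    simp only [pdx, pdy]
    have ew : fderiv ℝ u x w = (1 - c) * fderiv ℝ u x m + (1 + c) * fderiv ℝ u x d := by
      rw [hw, map_add, map_smul, map_smul, smul_eq_mul, smul_eq_mul]
    rw [ew, ha, hb, hσ]
    refine grad_alg hH h1 h2 h3 _ _ ?_ ?_ (by linarith) hc1 he
    · rw [← clm_expand, map_sub]
    · rw [← clm_expand, map_add]
  have s2 : a ^ 2 * (∫ x in tri V m d, fderiv ℝ (fderiv ℝ u) x m m ^ 2)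
      + 2 * a * b * (∫ x in tri V m d, fderiv ℝ (fderiv ℝ u) x m d ^ 2)
      + b ^ 2 * (∫ x in tri V m d, fderiv ℝ (fderiv ℝ u) x d d ^ 2)
      + (2 * σ * a * (∫ x in tri V m d, fderiv ℝ (fderiv ℝ u) x m w ^ 2)
      + 2 * σ * b * (∫ x in tri V m d, fderiv ℝ (fderiv ℝ u) x d w ^ 2))
      ≤ H ^ 2 * h2sq u (tri V m d) := by
    have g1 : IntegrableOn (fun x => a ^ 2 * fderiv ℝ (fderiv ℝ u) x m m ^ 2
        + 2 * a * b * fderiv ℝ (fderiv ℝ u) x m d ^ 2) (tri V m d) :=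
      (int (hDD m m) (a ^ 2)).add (int (hDD m d) (2 * a * b))
    have g2 : IntegrableOn (fun x => a ^ 2 * fderiv ℝ (fderiv ℝ u) x m m ^ 2
        + 2 * a * b * fderiv ℝ (fderiv ℝ u) x m d ^ 2
        + b ^ 2 * fderiv ℝ (fderiv ℝ u) x d d ^ 2) (tri V m d) :=
      g1.add (int (hDD d d) (b ^ 2))
    have g3 : IntegrableOn (fun x => 2 * σ * a * fderiv ℝ (fderiv ℝ u) x m w ^ 2
        + 2 * σ * b * fderiv ℝ (fderiv ℝ u) x d w ^ 2) (tri V m d) :=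
      (int (hDD m w) (2 * σ * a)).add (int (hDD d w) (2 * σ * b))
    have hh : h2sq u (tri V m d) = ∫ x in tri V m d, (fderiv ℝ (fderiv ℝ u) x (1, 0) (1, 0) ^ 2
        + fderiv ℝ (fderiv ℝ u) x (0, 1) (1, 0) ^ 2 + fderiv ℝ (fderiv ℝ u) x (1, 0) (0, 1) ^ 2
        + fderiv ℝ (fderiv ℝ u) x (0, 1) (0, 1) ^ 2) := by
      rw [h2sq]
      apply setIntegral_congr_fun hms
      intro x hx
      simp only [pdx, pdy]
      rw [← hDf _ x hx, ← hDf _ x hx, ← hDf _ x hx, ← hDf _ x hx]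
      rfl
    rw [hh, ← integral_const_mul, ← integral_const_mul, ← integral_const_mul,
      ← integral_const_mul, ← integral_const_mul, ← integral_const_mul,
      ← integral_add (int (hDD m m) (a ^ 2)) (int (hDD m d) (2 * a * b)),
      ← integral_add g1 (int (hDD d d) (b ^ 2)),
      ← integral_add (int (hDD m w) (2 * σ * a)) (int (hDD d w) (2 * σ * b)),
      ← integral_add g2 g3]
    refine setIntegral_mono_on (g2.add g3) ?_ hms ?_
    · refine ContinuousOn.integrableOn_compact hcomp (continuousOn_const.mul ?_)
      exact ((((hDD _ _).pow 2).add ((hDD _ _).pow 2)).add ((hDD _ _).pow 2)).add ((hDD _ _).pow 2)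
    intro x hx
    have exp : ∀ v v', fderiv ℝ (fderiv ℝ u) x v v'
        = v.1 * v'.1 * fderiv ℝ (fderiv ℝ u) x (1, 0) (1, 0)
        + (v.1 * v'.2 + v'.1 * v.2) * fderiv ℝ (fderiv ℝ u) x (1, 0) (0, 1)
        + v.2 * v'.2 * fderiv ℝ (fderiv ℝ u) x (0, 1) (0, 1) := by
      intro v v'
      have k := clm_expand ((fderiv ℝ (fderiv ℝ u) x).flip v') v
      simp only [ContinuousLinearMap.flip_apply] at k
      rw [k, clm_expand _ v', clm_expand (fderiv ℝ (fderiv ℝ u) x (0, 1)) v',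
        hsymm x hx (0, 1) (1, 0)]
      ring
    have ew : ∀ v, fderiv ℝ (fderiv ℝ u) x v w = (1 - c) * fderiv ℝ (fderiv ℝ u) x v m
        + (1 + c) * fderiv ℝ (fderiv ℝ u) x v d := by
      intro v
      rw [hw, map_add, map_smul, map_smul, smul_eq_mul, smul_eq_mul]
    have := hess_alg (a := fderiv ℝ (fderiv ℝ u) x (1, 0) (1, 0))
      (b := fderiv ℝ (fderiv ℝ u) x (1, 0) (0, 1)) (g := fderiv ℝ (fderiv ℝ u) x (0, 1) (0, 1))
      hH h1 h2 h3 (fderiv ℝ (fderiv ℝ u) x m m) (fderiv ℝ (fderiv ℝ u) x m d)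
      (fderiv ℝ (fderiv ℝ u) x d d)
      (by rw [exp m m, exp m d, exp d d]; simp only [Prod.fst_sub, Prod.snd_sub]; ring)
      (by rw [exp m m, exp d d]
          simp only [Prod.fst_sub, Prod.snd_sub, Prod.fst_add, Prod.snd_add]; ring)
      (by rw [exp m m, exp m d, exp d d]; simp only [Prod.fst_add, Prod.snd_add]; ring)
      (by linarith) hc1 he
    rw [← ha, ← hb, ← hσ] at this
    rw [ew m, ew d, hsymm x hx d m, hsymm x hx (0, 1) (1, 0)]
    linarith
  have fin : H * h1sq u (tri V m d) ≤ 89 / 2500 * (H ^ 2 * h2sq u (tri V m d)) := by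
    refine le_trans ?_ (mul_le_mul_of_nonneg_left s2 (by norm_num))
    rw [s1, q1, q2, q3, q4, q5, q6, q7, q8]
    linarith
  have : H * h1sq u (tri V m d) ≤ H * (89 / 2500 * H * h2sq u (tri V m d)) := by linarith
  exact le_of_mul_le_mul_left this hH

/-! ### Edge conditions and reduction to an ordered triangle -/

/-- The mean of `∇u` over the edge from `P` to `Q` vanishes. -/
def MeanGradZero (u : Pt → ℝ) (P Q : Pt) : Prop :=
  ∀ v, ∫ t in (0:ℝ)..1, fderiv ℝ u (P + t • (Q - P)) v = 0

theorem MeanGradZero.symm {u : Pt → ℝ} {P Q : Pt} (h : MeanGradZero u P Q) :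
    MeanGradZero u Q P := by
  intro v
  refine Eq.trans ?_ (h v)
  have := intervalIntegral.integral_comp_sub_left (a := 0) (b := 1)
    (fun t : ℝ => fderiv ℝ u (P + t • (Q - P)) v) 1
  simp only [sub_zero, sub_self] at this
  rw [← this]
  congr 1
  funext t
  congr 2
  module

theorem elen_sq (v : Pt) : elen v ^ 2 = v.1 ^ 2 + v.2 ^ 2 := Real.sq_sqrt (by positivity)

theorem elen_pos {v : Pt} (hv : v ≠ 0) : 0 < elen v := by
  refine Real.sqrt_pos.2 (lt_of_le_of_ne (by positivity) fun h => hv ?_)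
  ext
  · simp only [Prod.fst_zero]; nlinarith [sq_nonneg v.1, sq_nonneg v.2]
  · simp only [Prod.snd_zero]; nlinarith [sq_nonneg v.1, sq_nonneg v.2]

theorem elen_comm (P Q : Pt) : elen (P - Q) = elen (Q - P) := by
  unfold elen; congr 1; simp only [Prod.fst_sub, Prod.snd_sub]; ring

/-- The tangential component of `∇u` has vanishing mean because `u` vanishes at both end points, the
normal component by the edge condition. -/
theorem meanGradZero {u : Pt → ℝ} {K : Set Pt} (hu : Smooth2 u K) {P Q : Pt} (R : Pt)
    (hK : segment ℝ P Q ⊆ K) (hne : P ≠ Q) (hP : u P = 0) (hQ : u Q = 0)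
    (hn : edgeInt (normalDeriv u P Q R) P Q = 0) : MeanGradZero u P Q := by
  obtain ⟨U, hU, hKU, hC⟩ := hu
  have hv0 : Q - P ≠ 0 := sub_ne_zero.2 hne.symm
  have hpos := elen_pos hv0
  obtain ⟨E, hE⟩ : ∃ E, E = Q - P := ⟨_, rfl⟩
  have hγ : ∀ t ∈ Set.Icc (0:ℝ) 1, P + t • E ∈ U := fun t ht => hKU (hK (by
    rw [segment_eq_image', hE]; exact ⟨t, ht, rfl⟩))
  have hcont : ∀ v, ContinuousOn (fun t : ℝ => fderiv ℝ u (P + t • E) v) (Set.uIcc 0 1) := by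
    intro v
    rw [Set.uIcc_of_le zero_le_one]
    refine ContinuousOn.clm_apply ?_ continuousOn_const
    exact (hC.continuousOn_fderiv_of_isOpen hU (by norm_num)).comp
      (by fun_prop) (fun t ht => hγ t ht)
  have hint : ∀ v, IntervalIntegrable (fun t : ℝ => fderiv ℝ u (P + t • E) v) volume 0 1 :=
    fun v => (hcont v).intervalIntegrable
  have htan : ∫ t in (0:ℝ)..1, fderiv ℝ u (P + t • E) E = 0 := by
    have := intervalIntegral.integral_eq_sub_of_hasDerivAt (a := 0) (b := 1)
      (f := fun t : ℝ => u (P + t • E)) (f' := fun t => fderiv ℝ u (P + t • E) E) ?_ (hint E)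
    · rw [this]; simp [hE, hP, hQ]
    · intro t ht
      rw [Set.uIcc_of_le zero_le_one] at ht
      have h1 : HasDerivAt (fun t : ℝ => P + t • E) E t := by
        simpa using ((hasDerivAt_id t).smul_const E).const_add P
      have h2 := ((hC.differentiableOn two_ne_zero).differentiableAt
        (hU.mem_nhds (hγ t ht))).hasFDerivAt
      exact h2.comp_hasDerivAt t h1
  have hnor : ∫ t in (0:ℝ)..1, fderiv ℝ u (P + t • E) (E.2, -E.1) = 0 := by
    unfold edgeInt at hn
    have hn' := (mul_eq_zero.1 hn).resolve_left hpos.ne'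
    unfold normalDeriv at hn'
    obtain ⟨k, hk, ho⟩ : ∃ k : ℝ, k ≠ 0 ∧ outNormal P Q R = k • (E.2, -E.1) := by
      refine ⟨_, ?_, by rw [outNormal, ← hE]⟩
      rw [← hE] at hpos
      split_ifs
      · exact inv_ne_zero hpos.ne'
      · exact neg_ne_zero.2 (inv_ne_zero hpos.ne')
    simp only [ho, map_smul, smul_eq_mul, intervalIntegral.integral_const_mul, ← hE] at hn'
    exact (mul_eq_zero.1 hn').resolve_left hk
  intro v
  rw [← hE]
  have hD : E.1 ^ 2 + E.2 ^ 2 ≠ 0 := by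
    rw [← elen_sq, hE]; positivity
  have hv : v = ((v.1 * E.1 + v.2 * E.2) / (E.1 ^ 2 + E.2 ^ 2)) • E
      + ((v.1 * E.2 - v.2 * E.1) / (E.1 ^ 2 + E.2 ^ 2)) • (E.2, -E.1) := by
    ext
    · simp only [Prod.fst_add, Prod.smul_fst, smul_eq_mul]; field_simp; ring
    · simp only [Prod.snd_add, Prod.smul_snd, smul_eq_mul]; field_simp; ring
  rw [hv]
  simp only [map_add, map_smul, smul_eq_mul]
  rw [intervalIntegral.integral_add ((hint _).const_mul _) ((hint _).const_mul _),
    intervalIntegral.integral_const_mul, intervalIntegral.integral_const_mul, htan, hnor]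
  simp

/-- The longest edge joins `V` and `P`, the second longest joins `V` and `Q`. The shortest edge being
opposite to `V` gives `c ≥ 1/2`. -/
theorem bound_sorted {V P Q : Pt} {u : Pt → ℝ} (hdet : det2 (P - V) (Q - V) ≠ 0)
    (hu : Smooth2 u (Tri V P Q)) (hPV : MeanGradZero u V P) (hQV : MeanGradZero u V Q)
    (hPQ : MeanGradZero u P Q) (h1 : elen (Q - P) ≤ elen (Q - V))
    (h2 : elen (Q - V) ≤ elen (P - V)) :
    h1sq u (Tri V P Q) ≤ 89 / 2500 * elen (P - V) ^ 2 * h2sq u (Tri V P Q) := by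
  obtain ⟨m, hm⟩ : ∃ m : Pt, m = (1 / 2 : ℝ) • ((P - V) + (Q - V)) := ⟨_, rfl⟩
  obtain ⟨d, hd⟩ : ∃ d : Pt, d = (1 / 2 : ℝ) • ((Q - V) - (P - V)) := ⟨_, rfl⟩
  have hP : P = V + (m - d) := by rw [hm, hd]; module
  have hQ : Q = V + (m + d) := by rw [hm, hd]; module
  clear hm hd
  have hPV' : P - V = m - d := by rw [hP]; abel
  have hQV' : Q - V = m + d := by rw [hQ]; abel
  have hPQ' : Q - P = (m + d) - (m - d) := by rw [← hPV', ← hQV']; abel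
  have h1' := pow_le_pow_left₀ (Real.sqrt_nonneg _) h1 2
  have h2' := pow_le_pow_left₀ (Real.sqrt_nonneg _) h2 2
  change elen _ ^ 2 ≤ elen _ ^ 2 at h1' h2'
  rw [elen_sq, elen_sq] at h1' h2'
  rw [elen_sq, hPV']
  rw [hPV', hQV'] at hdet h2'
  rw [hPQ', hQV'] at h1'
  have htri : Tri V P Q = tri V m d := by rw [tri, hP, hQ]
  rw [htri] at hu ⊢
  unfold MeanGradZero at hPV hQV hPQ
  rw [hPV'] at hPV
  rw [hQV'] at hQV
  rw [hP, hQ] at hPQ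
  obtain ⟨E, hE⟩ : ∃ E : Pt, E = m - d := ⟨_, rfl⟩
  obtain ⟨F, hF⟩ : ∃ F : Pt, F = m + d := ⟨_, rfl⟩
  have hJ : det2 m d ≠ 0 := by
    intro h0; apply hdet
    have : det2 (m - d) (m + d) = 2 * det2 m d := by
      simp only [det2, Prod.fst_sub, Prod.snd_sub, Prod.fst_add, Prod.snd_add]; ring
    rw [this, h0, mul_zero]
  rw [← hE, ← hF] at h1' h2' hdet
  rw [← hE]
  have hH : 0 < E.1 ^ 2 + E.2 ^ 2 := by
    refine lt_of_le_of_ne (by positivity) fun h0 => hdet ?_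
    have a1 : E.1 = 0 := by nlinarith [sq_nonneg E.1, sq_nonneg E.2]
    have a2 : E.2 = 0 := by nlinarith [sq_nonneg E.1, sq_nonneg E.2]
    simp [det2, a1, a2]
  have hdd : 0 < det2 E F ^ 2 := by positivity
  simp only [Prod.fst_sub, Prod.snd_sub] at h1'
  obtain ⟨H, hHd⟩ : ∃ H, H = E.1 ^ 2 + E.2 ^ 2 := ⟨_, rfl⟩
  obtain ⟨c, hc⟩ : ∃ c, c = (E.1 * F.1 + E.2 * F.2) / H := ⟨_, rfl⟩
  obtain ⟨e, he⟩ : ∃ e, e = (F.1 ^ 2 + F.2 ^ 2) / H := ⟨_, rfl⟩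
  rw [← hHd] at hH h2' ⊢
  have hcH : E.1 * F.1 + E.2 * F.2 = c * H := by rw [hc]; field_simp
  have heH : F.1 ^ 2 + F.2 ^ 2 = e * H := by rw [he]; field_simp
  have he1 : e ≤ 1 := by
    rw [heH] at h2'; nlinarith
  have hc2 : 1 / 2 ≤ c := by
    rw [hc, le_div_iff₀ hH]; nlinarith
  have hce : c ^ 2 < e := by
    have : det2 E F ^ 2 = H ^ 2 * (e - c ^ 2) := by
      have : H ^ 2 * (e - c ^ 2) = H * (e * H) - (c * H) ^ 2 := by ring
      rw [this, ← hcH, ← heH, hHd, det2]; ring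
    rw [this] at hdd
    have := (mul_pos_iff_of_pos_left (pow_pos hH 2)).1 hdd
    linarith
  exact core hu hJ hH (by rw [← hE, hHd]) (by rw [← hE, ← hF]; exact hcH)
    (by rw [← hF]; exact heH) hc2 (by nlinarith) hce he1 hPV hQV hPQ

theorem det2_ne {O A B : Pt} (h : Nondeg O A B) : det2 (A - O) (B - O) ≠ 0 := by
  intro h0
  apply h
  have hOA : O ≠ A := by
    rintro rfl; apply h; simp [collinear_pair]
  have hD := (elen_sq (A - O)).symm
  have hp : 0 < elen (A - O) ^ 2 := pow_pos (elen_pos (sub_ne_zero.2 hOA.symm)) 2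
  rw [← hD] at hp
  rw [collinear_iff_of_mem (p₀ := O) (by simp)]
  refine ⟨A - O, ?_⟩
  simp only [Set.mem_insert_iff, Set.mem_singleton_iff, forall_eq_or_imp, forall_eq]
  refine ⟨⟨0, by simp⟩, ⟨1, by simp⟩,
    ⟨((B - O).1 * (A - O).1 + (B - O).2 * (A - O).2) / ((A - O).1 ^ 2 + (A - O).2 ^ 2), ?_⟩⟩
  rw [vadd_eq_add, ← sub_eq_iff_eq_add]
  unfold det2 at h0
  generalize B - O = F at *
  generalize A - O = E at *
  ext
  · simp only [Prod.smul_fst, smul_eq_mul]; field_simp; linear_combination (-E.2) * h0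
  · simp only [Prod.smul_snd, smul_eq_mul]; field_simp; linear_combination E.1 * h0

theorem det2_rot (O A B : Pt) : det2 (B - A) (O - A) = det2 (A - O) (B - O) := by
  simp only [det2, Prod.fst_sub, Prod.snd_sub]; ring

theorem det2_swap (m d : Pt) : det2 m d = -det2 d m := by
  simp only [det2]; ring

theorem Tri_rot (O A B : Pt) : Tri A B O = Tri O A B := by
  unfold Tri; congr 1; ext x; simp only [Set.mem_insert_iff, Set.mem_singleton_iff]; tauto

theorem Tri_swap (O A B : Pt) : Tri O B A = Tri O A B := by
  unfold Tri; congr 1; ext x; simp only [Set.mem_insert_iff, Set.mem_singleton_iff]; tauto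

theorem h2sq_nonneg (u : Pt → ℝ) (K : Set Pt) : 0 ≤ h2sq u K :=
  integral_nonneg fun _ => by positivity

/-- The case in which the longest edge joins `V` and `P`. -/
theorem bound_longest {V P Q : Pt} {u : Pt → ℝ} (hdet : det2 (P - V) (Q - V) ≠ 0)
    (hu : Smooth2 u (Tri V P Q)) (hPV : MeanGradZero u V P) (hQV : MeanGradZero u V Q)
    (hPQ : MeanGradZero u P Q) (h1 : elen (Q - P) ≤ elen (P - V))
    (h2 : elen (Q - V) ≤ elen (P - V)) :
    h1sq u (Tri V P Q) ≤ 89 / 2500 * elen (P - V) ^ 2 * h2sq u (Tri V P Q) := by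
  rcases le_total (elen (Q - P)) (elen (Q - V)) with h | h
  · exact bound_sorted hdet hu hPV hQV hPQ h h2
  · have ht : Tri P V Q = Tri V P Q := by rw [← Tri_rot, Tri_swap]
    rw [← ht] at hu ⊢
    rw [elen_comm P V] at h1 ⊢
    refine bound_sorted ?_ hu hPV.symm hPQ hQV h h1
    rw [det2_swap, det2_rot]; exact neg_ne_zero.2 hdet

theorem bound_sq {O A B : Pt} (hK : Nondeg O A B) {u : Pt → ℝ} (hu : MemVFM u O A B) :
    h1sq u (Tri O A B) ≤ 89 / 2500 * longestEdge O A B ^ 2 * h2sq u (Tri O A B) := by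
  obtain ⟨hs, hO, hA, hB, n1, n2, n3⟩ := hu
  have hd := det2_ne hK
  have sub : ∀ {P Q : Pt}, P ∈ ({O, A, B} : Set Pt) → Q ∈ ({O, A, B} : Set Pt) →
      segment ℝ P Q ⊆ Tri O A B := fun hP hQ =>
    (convex_convexHull ℝ _).segment_subset (subset_convexHull ℝ _ hP) (subset_convexHull ℝ _ hQ)
  have ne1 : O ≠ A := by rintro rfl; apply hd; simp [det2]
  have ne2 : A ≠ B := by rintro rfl; apply hd; simp only [det2]; ring
  have ne3 : B ≠ O := by rintro rfl; apply hd; simp [det2]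
  have g1 := meanGradZero hs B (sub (by simp) (by simp)) ne1 hO hA n1
  have g2 := meanGradZero hs O (sub (by simp) (by simp)) ne2 hA hB n2
  have g3 := meanGradZero hs A (sub (by simp) (by simp)) ne3 hB hO n3
  have t1 : Tri A B O = Tri O A B := Tri_rot _ _ _
  have t2 : Tri B O A = Tri O A B := by rw [Tri_rot, Tri_rot]
  rcases max_choice (elen (A - O)) (max (elen (B - A)) (elen (O - B))) with h | h
  · rw [longestEdge, h]
    obtain ⟨k1, k2⟩ := max_le_iff.1 (max_eq_left_iff.1 h)
    exact bound_longest hd hs g1 g3.symm g2 k1 (by rwa [elen_comm B O])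
  · have k := max_eq_right_iff.1 h
    rcases max_choice (elen (B - A)) (elen (O - B)) with h' | h'
    · rw [longestEdge, h, h']
      have k' := max_eq_left_iff.1 h'
      rw [h'] at k
      rw [← t1] at hs ⊢
      exact bound_longest (by rwa [det2_rot]) hs g2 g1.symm g3 k' (by rwa [elen_comm O A])
    · rw [longestEdge, h, h']
      have k' := max_eq_right_iff.1 h'
      rw [h'] at k
      rw [← t2] at hs ⊢
      exact bound_longest (by rwa [det2_rot, det2_rot]) hs g3 g2.symm g1 k (by rwa [elen_comm A B])

end FM

/-- For every nondegenerate triangle `K` with longest edge length `h` and every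
`u ∈ V_FM(K)`, `‖∇u‖_K ≤ 0.18868 h ‖D²u‖_K`. -/
theorem stmt_1 (O A B : Pt) (hK : Nondeg O A B) (u : Pt → ℝ) (hu : MemVFM u O A B) :
    h1norm u (Tri O A B) ≤ 0.18868 * longestEdge O A B * h2norm u (Tri O A B) := by
  have hL : 0 ≤ longestEdge O A B := (Real.sqrt_nonneg _).trans (le_max_left _ _)
  have h2 := FM.h2sq_nonneg u (Tri O A B)
  refine Real.sqrt_le_iff.2 ⟨mul_nonneg (by positivity) (Real.sqrt_nonneg _), ?_⟩
  rw [mul_pow, h2norm, Real.sq_sqrt h2]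
  refine (FM.bound_sq hK hu).trans (mul_le_mul_of_nonneg_right ?_ h2)
  rw [mul_pow]
  exact mul_le_mul_of_nonneg_right (by norm_num) (sq_nonneg _)
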